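/- Case A, all powers: Let l be a prime with l ≡ 3 (mod 4) and l ≥ 7, let r ≥ 1, let N = l^r, and assume f = φ(N)/2. Set h = h(Q(√-l)). Then there exist integers a, b with 4p^h = a² + l b² and a ≡ -2 p^{(l-1+2h)/4} (mod l) such that for every integer t with 0 ≤ t < r, G(χ^{l^t}) = p^{(f - h l^t)/2} · ((a + b √-l)/2)^{l^t}. -/

import Mathlib

open Complex Polynomial IntermediateField

/-- The complex primitive `p`-th root of unity `exp(2πi/p)`. -/
noncomputable def zetaP (p : ℕ) : ℂ := Complex.exp (2 * Real.pi * Complex.I / p)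

/-- The Gauss sum `G(χ^λ) = ∑_{x ∈ F, x ≠ 0} χ^λ(x) ζ_p^{T(x)}`, where
`T` is the trace map from `F` down to `ZMod p`. -/
noncomputable def gaussSumN (p : ℕ) {F : Type} [Field F] [Fintype F] [Algebra (ZMod p) F]
    (χ : MulChar F ℂ) (lam : ℕ) : ℂ :=
  letI : DecidableEq F := Classical.decEq F
  ∑ x ∈ Finset.univ.filter (fun x : F => x ≠ 0),
    (χ ^ lam) x * zetaP p ^ (Algebra.trace (ZMod p) F x).val

/-- `√-m = i√m ∈ ℂ`. -/
noncomputable def sqrtNeg (m : ℕ) : ℂ := Real.sqrt m * Complex.I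

theorem sqrtNeg_sq (m : ℕ) : sqrtNeg m ^ 2 = -(m : ℂ) := by
  have h : ((Real.sqrt m : ℝ) : ℂ) ^ 2 = ((m : ℝ) : ℂ) := by
    rw [← Complex.ofReal_pow, Real.sq_sqrt (by positivity)]
  simp only [sqrtNeg, mul_pow, Complex.I_sq, h]
  push_cast
  ring

theorem isIntegral_sqrtNeg (m : ℕ) : IsIntegral ℚ (sqrtNeg m) := by
  refine ⟨X ^ 2 + C (m : ℚ), monic_X_pow_add_C _ (by norm_num), ?_⟩
  simp [sqrtNeg_sq]

/-- The class number `h(ℚ(√-m))` of the quadratic field `ℚ(√-m) ⊆ ℂ`. -/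
noncomputable def classNumSqrtNeg (m : ℕ) : ℕ :=
  haveI : FiniteDimensional ℚ ℚ⟮sqrtNeg m⟯ :=
    IntermediateField.adjoin.finiteDimensional (isIntegral_sqrtNeg m)
  haveI : CharZero ℚ⟮sqrtNeg m⟯ :=
    charZero_of_injective_algebraMap (algebraMap ℚ ℚ⟮sqrtNeg m⟯).injective
  haveI : NumberField ℚ⟮sqrtNeg m⟯ := ⟨⟩
  NumberField.classNumber ℚ⟮sqrtNeg m⟯

/-- `√p* = √p` if `p ≡ 1 (mod 4)` and `i√p` if `p ≡ 3 (mod 4)`. -/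
noncomputable def sqrtPStar (p : ℕ) : ℂ :=
  if p % 4 = 1 then (Real.sqrt p : ℂ) else (Real.sqrt p : ℂ) * Complex.I

/-!
Since `p` has order `φ(l^r) / 2` modulo `l^r`, it generates the squares there, so by Frobenius
invariance `G(χ^{l^t})` lies in `ℚ(√-l)`, where it has norm `p^f`. Its valuation at a place above
`p` is given by Stickelberger's congruence as a sum of the residues `l^t k p^i mod l^r`, that is, a
sum over residues in a fixed quadratic class; this sum is determined by `∑ j (j / l)`, which equals
`± l h` by the analytic class number formula. Hence `G(χ^{l^t}) p^{f (l^t - 1) / 2}` and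
`G(χ)^{l^t}` have the same valuations and norm, and they agree up to a unit of `ℚ(√-l)`, i.e. up to
sign. Every Gauss sum of a character of `l`-power order is `-1` modulo a place above `l`, and this
fixes the sign as well as `a` modulo `l`.
-/

namespace IndexTwoGaussSum

section HurwitzZeta

open Filter Topology

/-- The `n`-th term of the paired series `∑ ((n + a)^(-s) - (n + 1 - a)^(-s)) / 2`. It represents
the odd Hurwitz zeta function for `s > 1`, and the pairing makes it converge absolutely at `s = 1`
too. -/
noncomputable def hurwitzOddTerm (a s : ℝ) (n : ℕ) : ℝ :=
  (((n : ℝ) + a) ^ (-s) - ((n : ℝ) + 1 - a) ^ (-s)) / 2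

lemma abs_rpow_neg_sub_rpow_neg_le {m x y s : ℝ} (hm : 0 < m) (hx : m ≤ x) (hy : m ≤ y)
    (hs : 0 < s) : |x ^ (-s) - y ^ (-s)| ≤ s * m ^ (-s - 1) * |x - y| := by
  have pos_of_mem {z : ℝ} (hz : z ∈ Set.Ici m) : 0 < z := hm.trans_le hz
  refine Convex.norm_image_sub_le_of_norm_hasDerivWithin_le (f := fun z : ℝ => z ^ (-s))
    (f' := fun z => (-s) * z ^ (-s - 1)) (s := Set.Ici m)
    (fun z hz => (Real.hasDerivAt_rpow_const (Or.inl (pos_of_mem hz).ne')).hasDerivWithinAt)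
    (fun z hz => ?_) (convex_Ici m) hy hx
  rw [norm_mul, Real.norm_eq_abs, Real.norm_eq_abs, abs_neg, abs_of_pos hs,
    abs_of_pos (Real.rpow_pos_of_pos (pos_of_mem hz) _)]
  exact mul_le_mul_of_nonneg_left (Real.rpow_le_rpow_of_nonpos hm hz (by linarith)) hs.le

lemma norm_hurwitzOddTerm_le {a d s : ℝ} (hd : 0 < d) (hda : d ≤ a) (had : a ≤ 1 - d)
    (hs : s ∈ Set.Icc 1 2) (n : ℕ) :
    ‖hurwitzOddTerm a s n‖ ≤ d⁻¹ * ((n : ℝ) + d) ^ (-2 : ℝ) := by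
  obtain ⟨hs1, hs2⟩ := hs
  have : (0 : ℝ) ≤ n := n.cast_nonneg
  have hnd : 0 < (n : ℝ) + d := by positivity
  have mean_value := abs_rpow_neg_sub_rpow_neg_le (x := n + a) (y := n + 1 - a) hnd
    (by linarith) (by linarith) (by linarith : 0 < s)
  have gap_le_one : |((n : ℝ) + a) - (n + 1 - a)| ≤ 1 := by
    rw [abs_le]; constructor <;> linarith
  have rpow_le : ((n : ℝ) + d) ^ (-s - 1) ≤ d⁻¹ * ((n : ℝ) + d) ^ (-2 : ℝ) := by
    rw [show -s - 1 = (1 - s) + (-2) by ring, Real.rpow_add hnd]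
    gcongr
    calc ((n : ℝ) + d) ^ (1 - s) ≤ d ^ (1 - s) :=
          Real.rpow_le_rpow_of_nonpos hd (by linarith) (by linarith)
      _ ≤ d ^ (-1 : ℝ) := Real.rpow_le_rpow_of_exponent_ge hd (by linarith) (by linarith)
      _ = d⁻¹ := Real.rpow_neg_one d
  rw [hurwitzOddTerm, norm_div, Real.norm_eq_abs, Real.norm_ofNat, div_le_iff₀ two_pos]
  calc _ ≤ s * ((n : ℝ) + d) ^ (-s - 1) * |((n : ℝ) + a) - (n + 1 - a)| := mean_value
    _ ≤ 2 * (d⁻¹ * ((n : ℝ) + d) ^ (-2 : ℝ)) * 1 := by gcongr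
    _ = d⁻¹ * ((n : ℝ) + d) ^ (-2 : ℝ) * 2 := by ring

lemma summable_const_mul_nat_add_rpow {d : ℝ} (hd : 0 < d) :
    Summable fun n : ℕ => d⁻¹ * ((n : ℝ) + d) ^ (-2 : ℝ) := by
  refine Summable.mul_left _ (((Real.summable_one_div_nat_add_rpow d 2).2 one_lt_two).congr
    fun n => ?_)
  rw [abs_of_pos (by positivity), Real.rpow_neg (by positivity), one_div]

lemma continuousAt_hurwitzOddTerm {a : ℝ} (h0 : 0 < a) (h1 : a < 1) (n : ℕ) (s : ℝ) :
    ContinuousAt (fun s => hurwitzOddTerm a s n) s := by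
  have : (0 : ℝ) ≤ n := n.cast_nonneg
  have left_ne : (n : ℝ) + a ≠ 0 := by positivity
  have right_ne : (n : ℝ) + 1 - a ≠ 0 := by linarith
  exact (((Real.continuousAt_const_rpow left_ne).comp continuousAt_neg).sub
    ((Real.continuousAt_const_rpow right_ne).comp continuousAt_neg)).div_const 2

lemma hurwitzZetaOdd_eq_tsum_of_one_lt {a s : ℝ} (ha : a ∈ Set.Icc 0 1) (hs : 1 < s) :
    HurwitzZeta.hurwitzZetaOdd (a : UnitAddCircle) s = ((∑' n, hurwitzOddTerm a s n : ℝ) : ℂ) := by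
  have series := HurwitzZeta.hasSum_nat_hurwitzZetaOdd_of_mem_Icc ha (s := s) (by simpa using hs)
  rw [← series.tsum_eq, ofReal_tsum]
  refine tsum_congr fun n => ?_
  have : (0 : ℝ) ≤ n := n.cast_nonneg
  have ha0 := ha.1
  have ha1 := ha.2
  push_cast [hurwitzOddTerm]
  rw [ofReal_cpow (by linarith), ofReal_cpow (by linarith)]
  push_cast
  rw [Complex.cpow_neg, Complex.cpow_neg, one_div, one_div]

lemma hurwitzZetaOdd_one_eq_tsum {a : ℝ} (h0 : 0 < a) (h1 : a < 1) :
    Summable (hurwitzOddTerm a 1) ∧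
      HurwitzZeta.hurwitzZetaOdd (a : UnitAddCircle) 1 =
        ((∑' n, hurwitzOddTerm a 1 n : ℝ) : ℂ) := by
  set d := min a (1 - a)
  have hd : 0 < d := lt_min h0 (by linarith)
  have bound {s : ℝ} (hs : s ∈ Set.Icc 1 2) := norm_hurwitzOddTerm_le hd (min_le_left a (1 - a))
    (by linarith [min_le_right a (1 - a)]) hs
  have summable_bound := summable_const_mul_nat_add_rpow hd
  refine ⟨.of_norm_bounded summable_bound (bound (by norm_num)), ?_⟩
  have near_one : Set.Ioo (1 : ℝ) 2 ∈ 𝓝[>] (1 : ℝ) := Ioo_mem_nhdsGT one_lt_two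
  have lim_series : Tendsto (fun s : ℝ => ∑' n, hurwitzOddTerm a s n) (𝓝[>] 1)
      (𝓝 (∑' n, hurwitzOddTerm a 1 n)) := by
    refine tendsto_tsum_of_dominated_convergence summable_bound (fun n => ?_) ?_
    · exact (continuousAt_hurwitzOddTerm h0 h1 n 1).tendsto.mono_left nhdsWithin_le_nhds
    · filter_upwards [near_one] with s hs using bound ⟨hs.1.le, hs.2.le⟩
  have lim_zeta : Tendsto (fun s : ℝ => HurwitzZeta.hurwitzZetaOdd (a : UnitAddCircle) s)
      (𝓝[>] 1) (𝓝 (HurwitzZeta.hurwitzZetaOdd (a : UnitAddCircle) 1)) := by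
    have cont : Continuous fun s : ℝ => HurwitzZeta.hurwitzZetaOdd (a : UnitAddCircle) s :=
      (HurwitzZeta.differentiable_hurwitzZetaOdd _).continuous.comp continuous_ofReal
    simpa only [ofReal_one] using (cont.tendsto 1).mono_left nhdsWithin_le_nhds
  refine tendsto_nhds_unique lim_zeta (((continuous_ofReal.tendsto _).comp lim_series).congr' ?_)
  filter_upwards [self_mem_nhdsWithin] with s hs
  exact (hurwitzZetaOdd_eq_tsum_of_one_lt ⟨h0.le, h1.le⟩ hs).symm

lemma sum_range_hurwitzOddTerm_one (a : ℝ) (M : ℕ) :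
    ((∑ n ∈ Finset.range M, hurwitzOddTerm a 1 n : ℝ) : ℂ) =
      (1 / (a : ℂ) + ∑ j ∈ Finset.range M, cotTerm (a : ℂ) j - 1 / (a + M)) / 2 := by
  induction M with
  | zero => simp
  | succ M ih =>
    have term : ((hurwitzOddTerm a 1 M : ℝ) : ℂ) =
        (1 / ((a : ℂ) + M) + 1 / (a - (M + 1))) / 2 := by
      push_cast [hurwitzOddTerm, Real.rpow_neg_one]
      rw [← neg_sub ((M : ℂ) + 1) a, one_div, one_div, inv_neg, add_comm (M : ℂ) a, sub_eq_add_neg]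
    rw [Finset.sum_range_succ, Finset.sum_range_succ, ofReal_add, ih, term, cotTerm]
    push_cast
    ring

lemma ofReal_mem_integerComplement {a : ℝ} (h0 : 0 < a) (h1 : a < 1) :
    (a : ℂ) ∈ Complex.integerComplement := by
  rw [Complex.mem_integerComplement_iff]
  rintro ⟨n, hn⟩
  have hna : (n : ℝ) = a := by exact_mod_cast hn
  rw [← hna] at h0 h1
  have : 0 < n := by exact_mod_cast h0
  have : n < 1 := by exact_mod_cast h1
  omega

/-- Mittag-Leffler for the cotangent: its partial sums are those of the paired series up to
`1 / (a + M)`. -/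
theorem hurwitzZetaOdd_one {a : ℝ} (h0 : 0 < a) (h1 : a < 1) :
    HurwitzZeta.hurwitzZetaOdd (a : UnitAddCircle) 1 = Real.pi / 2 * Complex.cot (Real.pi * a) := by
  obtain ⟨summable, eq_tsum⟩ := hurwitzZetaOdd_one_eq_tsum h0 h1
  have tail : Tendsto (fun M : ℕ => (1 : ℂ) / (a + M)) atTop (𝓝 0) := by
    have : Tendsto (fun M : ℕ => (1 : ℝ) / (a + M)) atTop (𝓝 0) :=
      (tendsto_atTop_add_const_left _ _ tendsto_natCast_atTop_atTop).const_div_atTop _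
    simpa [Function.comp_def] using (continuous_ofReal.tendsto _).comp this
  have cot_series := (((tendsto_logDeriv_euler_cot_sub
    (ofReal_mem_integerComplement h0 h1)).const_add (1 / (a : ℂ))).sub tail).div_const 2
  rw [eq_tsum, show (Real.pi : ℂ) / 2 * cot (Real.pi * a) =
    (1 / (a : ℂ) + (Real.pi * cot (Real.pi * a) - 1 / a) - 0) / 2 by ring]
  refine tendsto_nhds_unique ?_ cot_series
  simpa only [Function.comp_def, sum_range_hurwitzOddTerm_one] using
    (continuous_ofReal.tendsto _).comp summable.hasSum.tendsto_sum_nat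

end HurwitzZeta

section LValueAtOne

lemma sub_one_mul_sum_natCast_mul_pow {R : Type*} [CommRing R] (x : R) (n : ℕ) :
    (x - 1) * ∑ k ∈ Finset.range n, (k : R) * x ^ k =
      n * x ^ n - x * ∑ k ∈ Finset.range n, x ^ k := by
  induction n with
  | zero => simp
  | succ n ih =>
    rw [Finset.sum_range_succ, Finset.sum_range_succ, mul_add, ih]
    push_cast
    ring

lemma sum_zmod_val_eq_sum_range {M : Type*} [AddCommMonoid M] (n : ℕ) [NeZero n] (g : ℕ → M) :
    ∑ k : ZMod n, g k.val = ∑ k ∈ Finset.range n, g k := by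
  obtain ⟨m, rfl⟩ := Nat.exists_eq_succ_of_ne_zero (NeZero.ne n)
  rw [Finset.sum_range]
  rfl

variable {n : ℕ} [NeZero n]

lemma stdAddChar_sub_one_ne_zero {j : ZMod n} (hj : j ≠ 0) :
    (ZMod.stdAddChar j - 1 : ℂ) ≠ 0 := by
  rw [sub_ne_zero, ← AddChar.map_zero_eq_one (ZMod.stdAddChar (N := n))]
  exact ZMod.injective_stdAddChar.ne hj

lemma sum_val_mul_stdAddChar {j : ZMod n} (hj : j ≠ 0) :
    ∑ k : ZMod n, (k.val : ℂ) * ZMod.stdAddChar (j * k) = n / (ZMod.stdAddChar j - 1) := by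
  set x : ℂ := ZMod.stdAddChar j with hx
  have hx1 : x - 1 ≠ 0 := stdAddChar_sub_one_ne_zero hj
  have char_mul (k : ZMod n) : (ZMod.stdAddChar (j * k) : ℂ) = x ^ k.val := by
    rw [hx, ← AddChar.map_nsmul_eq_pow, nsmul_eq_mul, ZMod.natCast_zmod_val, mul_comm]
  have pow_n : x ^ n = 1 := by rw [hx, ← AddChar.map_nsmul_eq_pow]; simp
  have geom : ∑ k ∈ Finset.range n, x ^ k = 0 := by
    simpa [pow_n, hx1] using mul_geom_sum x n
  rw [eq_div_iff hx1, mul_comm, Finset.sum_congr rfl fun k _ => by rw [char_mul k],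
    sum_zmod_val_eq_sum_range n fun k => (k : ℂ) * x ^ k, sub_one_mul_sum_natCast_mul_pow,
    pow_n, geom, mul_one, mul_zero, sub_zero]

lemma cot_pi_mul_val_div {j : ZMod n} (hj : j ≠ 0) :
    Complex.cot (Real.pi * ((j.val / n : ℝ) : ℂ)) =
      I * (1 + 2 / n * ∑ k : ZMod n, (k.val : ℂ) * ZMod.stdAddChar (j * k)) := by
  have hn0 : (n : ℂ) ≠ 0 := Nat.cast_ne_zero.2 (NeZero.ne n)
  have exp_eq : Complex.exp (2 * I * (Real.pi * ((j.val / n : ℝ) : ℂ))) = ZMod.stdAddChar j := by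
    have := ZMod.stdAddChar_coe (N := n) (j.val : ℤ)
    simp only [Int.cast_natCast, ZMod.natCast_zmod_val] at this
    rw [this]
    push_cast
    ring_nf
  rw [Complex.cot_eq_exp_ratio, exp_eq, sum_val_mul_stdAddChar hj]
  have h1 := stdAddChar_sub_one_ne_zero hj
  set x : ℂ := ZMod.stdAddChar j
  have h2 : 1 - x ≠ 0 := by rwa [← neg_sub, neg_ne_zero]
  rw [div_eq_iff (mul_ne_zero I_ne_zero h2)]
  field_simp
  linear_combination (x ^ 2 - 1) * I_sq

variable {χ : DirichletCharacter ℂ n}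

lemma hurwitzZetaOdd_toAddCircle_one {j : ZMod n} (hj : j ≠ 0) :
    HurwitzZeta.hurwitzZetaOdd (ZMod.toAddCircle j) 1 =
      Real.pi / 2 * I + Real.pi * I / n * ∑ k : ZMod n, (k.val : ℂ) * ZMod.stdAddChar (j * k) := by
  have hn : (0 : ℝ) < n := Nat.cast_pos.2 (NeZero.pos n)
  have val_pos : (0 : ℝ) < j.val := by exact_mod_cast ZMod.val_pos.2 hj
  have val_lt : (j.val : ℝ) < n := by exact_mod_cast ZMod.val_lt j
  rw [ZMod.toAddCircle_apply, hurwitzZetaOdd_one (by positivity) ((div_lt_one hn).2 val_lt),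
    cot_pi_mul_val_div hj]
  ring

theorem LFunction_one_of_odd (hodd : χ.Odd) (hprim : χ.IsPrimitive) :
    χ.LFunction 1 =
      Real.pi * I / n ^ 2 * gaussSum χ ZMod.stdAddChar * ∑ k : ZMod n, (k.val : ℂ) * χ⁻¹ k := by
  have χ_zero : χ 0 = 0 := by
    have := hodd.to_fun 0
    rw [neg_zero] at this
    linear_combination this / 2
  have χ_ne_one : χ ≠ 1 := by
    rintro rfl
    have : (1 : ℂ) = -1 := by rw [← hodd, MulChar.one_apply isUnit_one.neg]
    norm_num at this
  have term (j : ZMod n) : χ j * HurwitzZeta.hurwitzZetaOdd (ZMod.toAddCircle j) 1 =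
      Real.pi / 2 * I * χ j + Real.pi * I / n *
        ∑ k : ZMod n, (k.val : ℂ) * (χ j * ZMod.stdAddChar.mulShift k j) := by
    rcases eq_or_ne j 0 with rfl | hj
    · simp [χ_zero]
    · simp_rw [hurwitzZetaOdd_toAddCircle_one hj, AddChar.mulShift_apply, mul_left_comm _ (χ j),
        ← Finset.mul_sum, mul_comm j]
      ring
  have gauss (k : ZMod n) : ∑ j : ZMod n, (k.val : ℂ) * (χ j * ZMod.stdAddChar.mulShift k j) =
      gaussSum χ ZMod.stdAddChar * (k.val * χ⁻¹ k) := by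
    rw [← Finset.mul_sum, ← gaussSum, gaussSum_mulShift_of_isPrimitive _ hprim]
    ring
  rw [DirichletCharacter.LFunction, ZMod.LFunction_def_odd hodd.to_fun,
    Finset.sum_congr rfl fun j _ => term j, Finset.sum_add_distrib, ← Finset.mul_sum,
    ← Finset.mul_sum, MulChar.sum_eq_zero_of_ne_one χ_ne_one, Finset.sum_comm,
    Finset.sum_congr rfl fun k _ => gauss k, ← Finset.mul_sum, Complex.cpow_neg_one]
  ring

end LValueAtOne

section QuadraticLValue

/-- The sum `∑ j (j / l)` over `0 ≤ j < l`, whose absolute value the analytic class number formula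
identifies with `l * h(ℚ(√-l))`. -/
noncomputable def legendreMoment (l : ℕ) [Fact l.Prime] : ℤ :=
  ∑ j : ZMod l, (j.val : ℤ) * quadraticChar (ZMod l) j

/-- The Legendre symbol modulo `l` as a complex Dirichlet character. -/
noncomputable def legendreChar (l : ℕ) [Fact l.Prime] : DirichletCharacter ℂ l :=
  (quadraticChar (ZMod l)).ringHomComp (Int.castRingHom ℂ)

variable {l : ℕ} [Fact l.Prime]

lemma isPrimitive_of_ne_one {R : Type*} [CommMonoidWithZero R] {χ : DirichletCharacter R l}
    (hχ : χ ≠ 1) : χ.IsPrimitive :=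
  ((Nat.dvd_prime Fact.out).1 χ.conductor_dvd_level).resolve_left
    fun h => hχ (χ.eq_one_iff_conductor_eq_one.2 h)

lemma legendreChar_apply (j : ZMod l) :
    legendreChar l j = ((quadraticChar (ZMod l) j : ℤ) : ℂ) := rfl

lemma legendreChar_isQuadratic : (legendreChar l).IsQuadratic :=
  (quadraticChar_isQuadratic (ZMod l)).comp _

lemma legendreChar_ne_one (h2 : l ≠ 2) : legendreChar l ≠ 1 := by
  rw [legendreChar, MulChar.ringHomComp_ne_one_iff (RingHom.injective_int _)]
  exact quadraticChar_ne_one (by rwa [ZMod.ringChar_zmod_n])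

lemma quadraticChar_neg_one_of_mod_four (h4 : l % 4 = 3) : quadraticChar (ZMod l) (-1) = -1 := by
  rw [quadraticChar_neg_one_iff_not_isSquare, ZMod.exists_sq_eq_neg_one_iff]
  simpa using h4

lemma legendreChar_odd (h4 : l % 4 = 3) : (legendreChar l).Odd := by
  rw [DirichletCharacter.Odd, legendreChar_apply, quadraticChar_neg_one_of_mod_four h4]
  norm_num

lemma gaussSum_legendreChar_sq (h4 : l % 4 = 3) {ψ : AddChar (ZMod l) ℂ} (hψ : ψ.IsPrimitive) :
    gaussSum (legendreChar l) ψ ^ 2 = -(l : ℂ) := by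
  rw [gaussSum_sq (χ := legendreChar l) (legendreChar_ne_one (by omega)) legendreChar_isQuadratic
    hψ, legendreChar_odd h4, ZMod.card]
  ring

lemma norm_LFunction_legendreChar_one (h4 : l % 4 = 3) :
    ‖(legendreChar l).LFunction 1‖ = Real.pi / (l * Real.sqrt l) * |legendreMoment l| := by
  have hl : (0 : ℝ) < l := by exact_mod_cast (Fact.out : l.Prime).pos
  have norm_gauss : ‖gaussSum (legendreChar l) ZMod.stdAddChar‖ = Real.sqrt l := by
    rw [eq_comm, Real.sqrt_eq_iff_mul_self_eq hl.le (norm_nonneg _), ← norm_mul, ← pow_two,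
      gaussSum_legendreChar_sq h4 (ZMod.isPrimitive_stdAddChar l), norm_neg, norm_natCast]
  have moment : ∑ k : ZMod l, (k.val : ℂ) * (legendreChar l)⁻¹ k = legendreMoment l := by
    rw [legendreChar_isQuadratic.inv, legendreMoment]
    push_cast
    rfl
  rw [LFunction_one_of_odd (legendreChar_odd h4)
    (isPrimitive_of_ne_one (legendreChar_ne_one (by omega))), moment, norm_mul, norm_mul,
    norm_gauss, norm_div, norm_mul]
  have sqrt_sq : Real.sqrt l ^ 2 = l := Real.sq_sqrt hl.le
  have : 0 < Real.sqrt l := Real.sqrt_pos.2 hl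
  simp only [norm_real, norm_I, norm_pow, norm_natCast, norm_intCast, Real.norm_eq_abs,
    abs_of_pos Real.pi_pos, Int.cast_abs]
  field_simp
  rw [sqrt_sq]

end QuadraticLValue

section IdealCount

/-- The number of ideals of norm `n`, i.e. the `n`-th coefficient of the Dedekind zeta function. -/
noncomputable def idealCount (R : Type*) [CommRing R] [IsDedekindDomain R] [Module.Free ℤ R]
    (n : ℕ) : ℕ :=
  Nat.card {I : Ideal R // Ideal.absNorm I = n}

lemma span_natCast_sup_span_natCast {R : Type*} [CommRing R] {m n : ℕ} (h : m.Coprime n) :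
    Ideal.span {(m : R)} ⊔ Ideal.span {(n : R)} = ⊤ := by
  rw [← Ideal.isCoprime_iff_sup_eq, Ideal.isCoprime_span_singleton_iff]
  exact Nat.Coprime.cast h

lemma le_of_pow_mul_pow_eq {R : Type*} [CommRing R] [IsDedekindDomain R] {P Q : Ideal R}
    (hP : P.IsMaximal) (hQ : Q.IsMaximal) (hP0 : P ≠ ⊥) (hne : P ≠ Q) {i j i' j' : ℕ}
    (h : P ^ i * Q ^ j = P ^ i' * Q ^ j') : i' ≤ i := by
  by_contra! hi
  obtain ⟨d, rfl⟩ := Nat.exists_eq_add_of_lt hi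
  rw [add_assoc, pow_add, mul_assoc] at h
  have hQj : Q ^ j ≤ P := by
    rw [mul_left_cancel₀ (pow_ne_zero i hP0) h, pow_succ]
    exact Ideal.mul_le_left.trans Ideal.mul_le_right
  exact hne (hQ.eq_of_le hP.ne_top (hP.isPrime.le_of_pow_le hQj)).symm

variable {R : Type*} [CommRing R] [IsDedekindDomain R] [Module.Free ℤ R] {p : ℕ}

lemma mul_sup_span_absNorm {A B : Ideal R}
    (h : (Ideal.absNorm A).Coprime (Ideal.absNorm B)) :
    A * B ⊔ Ideal.span {(Ideal.absNorm A : R)} = A := by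
  refine le_antisymm (sup_le Ideal.mul_le_left (Ideal.span_singleton_absNorm_le A)) ?_
  have top : B ⊔ Ideal.span {(Ideal.absNorm A : R)} = ⊤ := by
    rw [eq_top_iff, ← span_natCast_sup_span_natCast (R := R) h, sup_comm]
    exact sup_le_sup_right (Ideal.span_singleton_absNorm_le B) _
  calc A = A * (B ⊔ Ideal.span {(Ideal.absNorm A : R)}) := by rw [top, Ideal.mul_top]
    _ = A * B ⊔ A * Ideal.span {(Ideal.absNorm A : R)} := Ideal.mul_sup _ _ _
    _ ≤ _ := sup_le_sup_left Ideal.mul_le_right _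

lemma sup_span_mul_sup_span {I : Ideal R} {m n : ℕ} (h : m.Coprime n)
    (hI : Ideal.absNorm I = m * n) :
    (I ⊔ Ideal.span {(m : R)}) * (I ⊔ Ideal.span {(n : R)}) = I := by
  have span_mul_le : Ideal.span {(m : R)} * Ideal.span {(n : R)} ≤ I := by
    rw [Ideal.span_singleton_mul_span_singleton, ← Nat.cast_mul, ← hI]
    exact Ideal.span_singleton_absNorm_le I
  apply le_antisymm
  · rw [Ideal.sup_mul, Ideal.mul_sup, Ideal.mul_sup]
    exact sup_le (sup_le Ideal.mul_le_left Ideal.mul_le_left)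
      (sup_le Ideal.mul_le_right span_mul_le)
  · calc I = I * Ideal.span {(m : R)} ⊔ I * Ideal.span {(n : R)} := by
          rw [← Ideal.mul_sup, span_natCast_sup_span_natCast h, Ideal.mul_top]
      _ ≤ _ := by
        refine sup_le ?_ (Ideal.mul_mono le_sup_left le_sup_right)
        rw [mul_comm]
        exact Ideal.mul_mono le_sup_right le_sup_left

lemma exists_eq_pow_mul_pow (hp : p.Prime) {P Q : Ideal R}
    (hPQ : ∀ M : Ideal R, M.IsPrime → (p : R) ∈ M → M = P ∨ M = Q) {I : Ideal R} {k : ℕ}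
    (hI : Ideal.absNorm I = p ^ k) : ∃ i j, I = P ^ i * Q ^ j := by
  induction I using UniqueFactorizationMonoid.induction_on_prime generalizing k with
  | h₁ => exact absurd (hI.symm.trans Ideal.absNorm_bot) (pow_ne_zero _ hp.ne_zero)
  | h₂ x hx => exact ⟨0, 0, by simpa using Ideal.isUnit_iff.1 hx⟩
  | h₃ J M _ hM ih =>
    have M_prime := Ideal.isPrime_of_prime hM
    have p_mem : (p : R) ∈ M := by
      refine M_prime.mem_of_pow_mem k (Ideal.mul_le_right (I := J) ?_)
      have := Ideal.absNorm_mem (M * J)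
      rwa [hI, Nat.cast_pow, mul_comm] at this
    rw [map_mul] at hI
    obtain ⟨k', -, hk'⟩ := (Nat.dvd_prime_pow hp).1 (Dvd.intro_left _ hI)
    obtain ⟨i, j, hij⟩ := ih hk'
    rcases hPQ M M_prime p_mem with h | h
    · exact ⟨i + 1, j, by rw [hij, h]; ring⟩
    · exact ⟨i, j + 1, by rw [hij, h]; ring⟩

lemma idealCount_prime_pow_of_split (hp : p.Prime) {P Q : Ideal R} (hP : P.IsMaximal)
    (hQ : Q.IsMaximal) (hne : P ≠ Q) (normP : Ideal.absNorm P = p) (normQ : Ideal.absNorm Q = p)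
    (hPQ : ∀ M : Ideal R, M.IsPrime → (p : R) ∈ M → M = P ∨ M = Q) (k : ℕ) :
    idealCount R (p ^ k) = k + 1 := by
  rw [idealCount, ← Nat.card_fin (k + 1)]
  have hP0 : P ≠ ⊥ := by
    rintro rfl
    exact hp.ne_zero (normP.symm.trans Ideal.absNorm_bot)
  have norm_eq (i j : ℕ) : Ideal.absNorm (P ^ i * Q ^ j) = p ^ (i + j) := by
    rw [map_mul, map_pow, map_pow, normP, normQ, ← pow_add]
  refine (Nat.card_congr (Equiv.ofBijective
    (fun i : Fin (k + 1) => ⟨P ^ i.1 * Q ^ (k - i.1), by rw [norm_eq]; congr 1; omega⟩)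
    ⟨?_, ?_⟩)).symm
  · intro i i' h
    have h : P ^ i.1 * Q ^ (k - i.1) = P ^ i'.1 * Q ^ (k - i'.1) := congrArg Subtype.val h
    exact Fin.ext (le_antisymm (le_of_pow_mul_pow_eq hP hQ hP0 hne h.symm)
      (le_of_pow_mul_pow_eq hP hQ hP0 hne h))
  · rintro ⟨I, hI⟩
    obtain ⟨i, j, rfl⟩ := exists_eq_pow_mul_pow hp hPQ hI
    have : i + j = k := Nat.pow_right_injective hp.two_le ((norm_eq i j).symm.trans hI)
    refine ⟨⟨i, by omega⟩, Subtype.ext ?_⟩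
    change P ^ i * Q ^ (k - i) = P ^ i * Q ^ j
    congr 2
    omega

lemma exists_eq_pow_of_absNorm (hp : p.Prime) {P : Ideal R} {e : ℕ}
    (normP : Ideal.absNorm P = p ^ e) (hP : ∀ M : Ideal R, M.IsPrime → (p : R) ∈ M → M = P)
    {I : Ideal R} {k : ℕ} (hI : Ideal.absNorm I = p ^ k) : ∃ i, k = e * i ∧ I = P ^ i := by
  obtain ⟨i, j, rfl⟩ := exists_eq_pow_mul_pow (Q := P) hp (fun M hM h => Or.inl (hP M hM h)) hI
  rw [← pow_add, map_pow, normP, ← pow_mul] at hI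
  exact ⟨i + j, (Nat.pow_right_injective hp.two_le hI).symm, (pow_add _ _ _).symm⟩

lemma idealCount_prime_pow_of_unique (hp : p.Prime) {P : Ideal R} {e : ℕ} (he : e ≠ 0)
    (normP : Ideal.absNorm P = p ^ e) (hP : ∀ M : Ideal R, M.IsPrime → (p : R) ∈ M → M = P)
    (k : ℕ) : idealCount R (p ^ k) = if e ∣ k then 1 else 0 := by
  rw [idealCount]
  split_ifs with hk
  · obtain ⟨m, hm⟩ := hk
    have eq_pow {I : Ideal R} (hI : Ideal.absNorm I = p ^ k) : I = P ^ m := by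
      obtain ⟨i, hi, rfl⟩ := exists_eq_pow_of_absNorm hp normP hP hI
      rw [Nat.eq_of_mul_eq_mul_left (Nat.pos_of_ne_zero he) (hi.symm.trans hm)]
    rw [Nat.card_eq_one_iff_unique]
    exact ⟨⟨fun I J => Subtype.ext ((eq_pow I.2).trans (eq_pow J.2).symm)⟩,
      ⟨⟨P ^ m, by rw [map_pow, normP, ← pow_mul, hm]⟩⟩⟩
  · rw [Nat.card_eq_zero]
    refine Or.inl ⟨fun ⟨I, hI⟩ => hk ?_⟩
    obtain ⟨i, hi, -⟩ := exists_eq_pow_of_absNorm hp normP hP hI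
    exact ⟨i, hi⟩

variable [Module.Finite ℤ R]

lemma absNorm_sup_span_dvd {I : Ideal R} {m n : ℕ} (h : m.Coprime n)
    (hI : Ideal.absNorm I = m * n) : Ideal.absNorm (I ⊔ Ideal.span {(m : R)}) ∣ m := by
  have dvd_pow : Ideal.absNorm (I ⊔ Ideal.span {(m : R)}) ∣ m ^ Module.finrank ℤ R := by
    rw [← Ideal.absNorm_span_natCast (S := R)]
    exact Ideal.absNorm_dvd_absNorm_of_le le_sup_right
  exact ((h.pow_left _).coprime_dvd_left dvd_pow).dvd_of_dvd_mul_right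
    (hI ▸ Ideal.absNorm_dvd_absNorm_of_le le_sup_left)

lemma absNorm_sup_span {I : Ideal R} {m n : ℕ} (h : m.Coprime n)
    (hI : Ideal.absNorm I = m * n) : Ideal.absNorm (I ⊔ Ideal.span {(m : R)}) = m := by
  refine Nat.dvd_antisymm (absNorm_sup_span_dvd h hI) ?_
  have dvd_n := absNorm_sup_span_dvd h.symm (hI.trans (mul_comm m n))
  have norm_mul := congrArg Ideal.absNorm (sup_span_mul_sup_span h hI)
  rw [map_mul, hI] at norm_mul
  exact (h.coprime_dvd_right dvd_n).dvd_of_dvd_mul_right (norm_mul ▸ Dvd.intro _ rfl)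

lemma idealCount_mul {m n : ℕ} (h : m.Coprime n) :
    idealCount R (m * n) = idealCount R m * idealCount R n := by
  rw [idealCount, idealCount, idealCount, ← Nat.card_prod]
  refine (Nat.card_congr (Equiv.ofBijective
    (fun x => ⟨x.1.1 * x.2.1, by rw [map_mul, x.1.2, x.2.2]⟩) ⟨?_, ?_⟩)).symm
  · have recover_left {m n : ℕ} (h : m.Coprime n) (A B : Ideal R) (hA : Ideal.absNorm A = m)
        (hB : Ideal.absNorm B = n) : A * B ⊔ Ideal.span {(m : R)} = A := by
      subst hA hB
      exact mul_sup_span_absNorm h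
    rintro ⟨⟨A, hA⟩, ⟨B, hB⟩⟩ ⟨⟨A', hA'⟩, ⟨B', hB'⟩⟩ heq
    replace heq : A * B = A' * B' := congrArg Subtype.val heq
    have left_eq : A = A' := by
      rw [← recover_left h A B hA hB, heq, recover_left h A' B' hA' hB']
    have right_eq : B = B' := by
      rw [← recover_left h.symm B A hB hA, mul_comm, heq, mul_comm,
        recover_left h.symm B' A' hB' hA']
    simp only [left_eq, right_eq]
  · rintro ⟨I, hI⟩
    exact ⟨⟨⟨_, absNorm_sup_span h hI⟩, ⟨_, absNorm_sup_span h.symm (hI.trans (mul_comm m n))⟩⟩,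
      Subtype.ext (sup_span_mul_sup_span h hI)⟩

end IdealCount

section QuadraticOrder

open QuadraticAlgebra

variable {l p c : ℕ}

section RootCount

lemma exists_root_zmod_two_iff : ∀ d : ZMod 2, (∃ t : ZMod 2, t ^ 2 - t + d = 0) ↔ d = 0 := by
  decide

variable [Fact p.Prime]

lemma natCast_prime_ne_zero {q : ℕ} (hq : q.Prime) (hqp : q ≠ p) : (q : ZMod p) ≠ 0 := by
  rwa [Ne, ZMod.natCast_eq_zero_iff, Nat.prime_dvd_prime_iff_eq Fact.out hq, eq_comm]

lemma legendreSym_neg_eq [Fact l.Prime] (hl : l % 4 = 3) (hp : p ≠ 2) :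
    legendreSym p (-l) = legendreSym l p := by
  have p_odd : p % 2 = 1 := (Fact.out : p.Prime).mod_two_eq_one_iff_ne_two.2 hp
  rw [← neg_one_mul, legendreSym.mul, legendreSym.at_neg_one hp]
  have p_mod : p % 4 = 1 ∨ p % 4 = 3 := by omega
  rcases p_mod with h | h
  · rw [ZMod.χ₄_nat_one_mod_four h, one_mul,
      legendreSym.quadratic_reciprocity_one_mod_four h (by omega)]
  · rw [ZMod.χ₄_nat_three_mod_four h, legendreSym.quadratic_reciprocity_three_mod_four hl h]
    ring

lemma exists_root_iff_isSquare_neg (hp : p ≠ 2) (hc : l + 1 = 4 * c) :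
    (∃ t : ZMod p, t ^ 2 - t + c = 0) ↔ IsSquare (-(l : ZMod p)) := by
  have two_ne : (2 : ZMod p) ≠ 0 := by
    exact_mod_cast natCast_prime_ne_zero Nat.prime_two hp.symm
  have hc' : (l : ZMod p) + 1 = 4 * c := by exact_mod_cast congrArg (Nat.cast : ℕ → ZMod p) hc
  constructor
  · rintro ⟨t, ht⟩
    exact ⟨2 * t - 1, by linear_combination -4 * ht - hc'⟩
  · rintro ⟨s, hs⟩
    refine ⟨(s + 1) / 2, ?_⟩
    field_simp
    linear_combination -hs - hc'

theorem exists_root_iff_quadraticChar_eq_one [Fact l.Prime] (hc : l + 1 = 4 * c) (hpl : p ≠ l) :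
    (∃ t : ZMod p, t ^ 2 - t + c = 0) ↔ quadraticChar (ZMod l) p = 1 := by
  have p_ne : (p : ZMod l) ≠ 0 := natCast_prime_ne_zero Fact.out hpl
  by_cases hp2 : p = 2
  · subst hp2
    rw [quadraticChar_one_iff_isSquare p_ne, Nat.cast_two, ZMod.exists_sq_eq_two_iff (by omega)]
    rw [exists_root_zmod_two_iff, ZMod.natCast_eq_zero_iff]
    omega
  · have l_ne : ((-l : ℤ) : ZMod p) ≠ 0 := by
      simpa using natCast_prime_ne_zero (p := p) (Fact.out : l.Prime) hpl.symm
    have char_eq : quadraticChar (ZMod l) p = legendreSym l p := by simp [legendreSym]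
    rw [exists_root_iff_isSquare_neg hp2 hc, char_eq, ← legendreSym_neg_eq (by omega) hp2,
      legendreSym.eq_one_iff _ l_ne]
    simp

end RootCount

variable {R : Type*} [CommRing R] (e : QuadraticAlgebra ℤ (-(c : ℤ)) 1 ≃+* R)

lemma image_omega_sq : e ω ^ 2 - e ω + c = 0 := by
  rw [← map_natCast e c, ← map_pow, ← map_sub, ← map_add, pow_two, omega_mul_omega_eq_add]
  simp

lemma exists_eq_add_mul_image_omega (x : R) : ∃ a b : ℤ, x = a + b * e ω := by
  refine ⟨(e.symm x).re, (e.symm x).im, ?_⟩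
  have : e.symm x = ((e.symm x).re : QuadraticAlgebra ℤ (-(c : ℤ)) 1) +
      ((e.symm x).im : QuadraticAlgebra ℤ (-(c : ℤ)) 1) * ω := by
    ext <;> simp
  rw [← map_intCast e, ← map_intCast e, ← map_mul, ← map_add, ← this, e.apply_symm_apply]

lemma exists_ringHom_image_omega {t : ZMod p} (ht : t ^ 2 - t + c = 0) :
    ∃ φ : R →+* ZMod p, φ (e ω) = t := by
  refine ⟨(QuadraticAlgebra.lift ⟨t, ?_⟩ :
    QuadraticAlgebra ℤ (-(c : ℤ)) 1 →ₐ[ℤ] ZMod p).toRingHom.comp e.symm.toRingHom, by simp⟩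
  simp only [neg_smul, zsmul_eq_mul, Int.cast_natCast, mul_one, one_smul]
  linear_combination ht

include e in
lemma finrank_eq_two_of_quadratic : Module.finrank ℤ R = 2 := by
  rw [← QuadraticAlgebra.finrank_eq_two (R := ℤ) (-(c : ℤ)) 1]
  exact e.toAddEquiv.toIntLinearEquiv.finrank_eq.symm

variable [Fact p.Prime]

lemma ker_le_of_sub_intCast_mem {φ : R →+* ZMod p} {τ : ℤ} (hτ : τ = φ (e ω)) {M : Ideal R}
    (hpM : (p : R) ∈ M) (hM : e ω - τ ∈ M) : RingHom.ker φ ≤ M := by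
  intro x hx
  obtain ⟨a, b, rfl⟩ := exists_eq_add_mul_image_omega e x
  rw [RingHom.mem_ker, map_add, map_mul, map_intCast, map_intCast, ← hτ] at hx
  obtain ⟨d, hd⟩ := (ZMod.intCast_zmod_eq_zero_iff_dvd (a + b * τ) p).1 (by exact_mod_cast hx)
  have hd' : (a : R) + b * τ = p * d := by exact_mod_cast congrArg (Int.cast : ℤ → R) hd
  rw [show (a : R) + b * e ω = p * d + b * (e ω - τ) by linear_combination hd']
  exact M.add_mem (M.mul_mem_right _ hpM) (M.mul_mem_left _ hM)

lemma eq_ker_or_eq_ker {φ ψ : R →+* ZMod p} (hψ : ψ (e ω) = 1 - φ (e ω)) {M : Ideal R}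
    (hM : M.IsPrime) (hpM : (p : R) ∈ M) : M = RingHom.ker φ ∨ M = RingHom.ker ψ := by
  obtain ⟨τ, hτ⟩ := ZMod.intCast_surjective (φ (e ω))
  have hψτ : ((1 - τ : ℤ) : ZMod p) = ψ (e ω) := by rw [hψ, ← hτ]; simp
  have root := congrArg φ (image_omega_sq e)
  rw [map_add, map_sub, map_pow, map_natCast, map_zero, ← hτ] at root
  obtain ⟨d, hd⟩ := (ZMod.intCast_zmod_eq_zero_iff_dvd (τ ^ 2 - τ + c) p).1
    (by exact_mod_cast root)
  have hd' : (τ : R) ^ 2 - τ + c = p * d := by exact_mod_cast congrArg (Int.cast : ℤ → R) hd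
  have prod_mem : (e ω - τ) * (e ω - (1 - τ : ℤ)) ∈ M := by
    rw [show (e ω - τ) * (e ω - (1 - τ : ℤ)) = p * (-d) by
      push_cast
      linear_combination image_omega_sq e - hd']
    exact M.mul_mem_right _ hpM
  have ker_maximal (φ : R →+* ZMod p) : (RingHom.ker φ).IsMaximal :=
    RingHom.ker_isMaximal_of_surjective φ (ZMod.ringHom_surjective φ)
  refine (hM.mem_or_mem prod_mem).imp (fun h => ?_) fun h => ?_
  · exact ((ker_maximal φ).eq_of_le hM.ne_top (ker_le_of_sub_intCast_mem e hτ hpM h)).symm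
  · exact ((ker_maximal ψ).eq_of_le hM.ne_top (ker_le_of_sub_intCast_mem e hψτ hpM h)).symm

lemma image_omega_eq_of_ker_eq {φ ψ : R →+* ZMod p} (h : RingHom.ker φ = RingHom.ker ψ) :
    φ (e ω) = ψ (e ω) := by
  obtain ⟨τ, hτ⟩ := ZMod.intCast_surjective (φ (e ω))
  have mem_ker : e ω - τ ∈ RingHom.ker φ := by
    rw [RingHom.mem_ker, map_sub, map_intCast, hτ, sub_self]
  rw [h, RingHom.mem_ker, map_sub, map_intCast, hτ, sub_eq_zero] at mem_ker
  exact mem_ker.symm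

lemma dvd_of_dvd_norm_form (hroot : ¬∃ t : ZMod p, t ^ 2 - t + c = 0) {a b : ℤ}
    (h : (p : ℤ) ∣ a ^ 2 + a * b + c * b ^ 2) : (p : ℤ) ∣ a ∧ (p : ℤ) ∣ b := by
  have norm_zero : (a : ZMod p) ^ 2 + a * b + c * b ^ 2 = 0 := by
    exact_mod_cast (ZMod.intCast_zmod_eq_zero_iff_dvd _ p).2 h
  have hb : (b : ZMod p) = 0 := by
    by_contra hb
    refine hroot ⟨-a / b, ?_⟩
    field_simp
    linear_combination norm_zero
  have ha : (a : ZMod p) = 0 := by simpa [hb] using norm_zero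
  exact ⟨(ZMod.intCast_zmod_eq_zero_iff_dvd a p).1 ha, (ZMod.intCast_zmod_eq_zero_iff_dvd b p).1 hb⟩

include e in
lemma eq_span_of_forall_not_root (hroot : ¬∃ t : ZMod p, t ^ 2 - t + c = 0) {M : Ideal R}
    (hM : M.IsPrime) (hpM : (p : R) ∈ M) : M = Ideal.span {(p : R)} := by
  refine le_antisymm (fun x hx => ?_) (by rwa [Ideal.span_singleton_le_iff_mem])
  obtain ⟨a, b, rfl⟩ := exists_eq_add_mul_image_omega e x
  have norm_mem : ((a ^ 2 + a * b + c * b ^ 2 : ℤ) : R) ∈ M := by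
    rw [show ((a ^ 2 + a * b + c * b ^ 2 : ℤ) : R) = (a + b * e ω) * (a + b * (1 - e ω)) by
      push_cast
      linear_combination b ^ 2 * image_omega_sq e]
    exact M.mul_mem_right _ hx
  have p_dvd : (p : ℤ) ∣ a ^ 2 + a * b + c * b ^ 2 := by
    by_contra not_dvd
    obtain ⟨u, v, huv⟩ :=
      (Nat.prime_iff_prime_int.1 (Fact.out : p.Prime)).coprime_iff_not_dvd.2 not_dvd
    refine hM.ne_top ((Ideal.eq_top_iff_one _).2 ?_)
    rw [← Int.cast_one, ← huv, Int.cast_add, Int.cast_mul, Int.cast_mul, Int.cast_natCast]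
    exact M.add_mem (M.mul_mem_left _ hpM) (M.mul_mem_left _ norm_mem)
  obtain ⟨⟨a', rfl⟩, ⟨b', rfl⟩⟩ := dvd_of_dvd_norm_form hroot p_dvd
  rw [Ideal.mem_span_singleton]
  exact ⟨a' + b' * e ω, by push_cast; ring⟩

variable [IsDedekindDomain R] [Module.Free ℤ R]

lemma absNorm_ker (φ : R →+* ZMod p) : Ideal.absNorm (RingHom.ker φ) = p := by
  rw [Ideal.absNorm_apply, Submodule.cardQuot_apply,
    Nat.card_congr (RingHom.quotientKerEquivOfSurjective (ZMod.ringHom_surjective φ)).toEquiv,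
    Nat.card_zmod]

variable [Fact l.Prime]

include e in
lemma idealCount_prime_pow_of_ramified (hc : l + 1 = 4 * c) (k : ℕ) : idealCount R (l ^ k) = 1 := by
  have two_ne : (2 : ZMod l) ≠ 0 := by
    exact_mod_cast natCast_prime_ne_zero (p := l) Nat.prime_two (by omega)
  have hc' : (1 : ZMod l) = 4 * c := by
    simpa using congrArg (Nat.cast : ℕ → ZMod l) hc
  obtain ⟨φ, hφ⟩ := exists_ringHom_image_omega e (t := (1 / 2 : ZMod l)) (by
    field_simp
    linear_combination -hc')
  have hφφ : φ (e ω) = 1 - φ (e ω) := by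
    rw [hφ]
    field_simp
    norm_num
  rw [idealCount_prime_pow_of_unique Fact.out one_ne_zero (by rw [absNorm_ker φ, pow_one])
    (fun M hM hlM => by simpa using eq_ker_or_eq_ker e hφφ hM hlM), if_pos (one_dvd k)]

variable [Module.Finite ℤ R]

include e in
theorem idealCount_prime_pow (hc : l + 1 = 4 * c) (k : ℕ) :
    (idealCount R (p ^ k) : ℤ) = ∑ i ∈ Finset.range (k + 1), quadraticChar (ZMod l) p ^ i := by
  rcases eq_or_ne p l with rfl | hpl
  · simp [idealCount_prime_pow_of_ramified e hc, Finset.sum_range_succ']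
  have root_iff := exists_root_iff_quadraticChar_eq_one hc hpl
  by_cases hroot : ∃ t : ZMod p, t ^ 2 - t + c = 0
  · obtain ⟨t, ht⟩ := id hroot
    obtain ⟨φ, rfl⟩ := exists_ringHom_image_omega e ht
    obtain ⟨ψ, hψ⟩ := exists_ringHom_image_omega e (t := 1 - φ (e ω)) (by linear_combination ht)
    have hne : RingHom.ker φ ≠ RingHom.ker ψ := fun h => by
      have hφ : φ (e ω) = 1 - φ (e ω) := (image_omega_eq_of_ker_eq e h).trans hψ
      have hc' : (l : ZMod p) + 1 = 4 * c := by
        exact_mod_cast congrArg (Nat.cast : ℕ → ZMod p) hc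
      refine natCast_prime_ne_zero (p := p) (Fact.out : l.Prime) hpl.symm ?_
      linear_combination hc' + 4 * ht - (2 * φ (e ω) - 1) * hφ
    have ker_maximal (φ : R →+* ZMod p) : (RingHom.ker φ).IsMaximal :=
      RingHom.ker_isMaximal_of_surjective φ (ZMod.ringHom_surjective φ)
    rw [root_iff.1 hroot, idealCount_prime_pow_of_split Fact.out (ker_maximal φ) (ker_maximal ψ)
      hne (absNorm_ker φ) (absNorm_ker ψ) fun M => eq_ker_or_eq_ker e hψ]
    simp
  · have p_ne : (p : ZMod l) ≠ 0 := natCast_prime_ne_zero Fact.out hpl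
    have norm_span : Ideal.absNorm (Ideal.span {(p : R)}) = p ^ 2 := by
      rw [Ideal.absNorm_span_natCast, finrank_eq_two_of_quadratic e]
    rw [(quadraticChar_dichotomy p_ne).resolve_left (mt root_iff.2 hroot), neg_one_geom_sum,
      idealCount_prime_pow_of_unique Fact.out two_ne_zero norm_span
        (fun M => eq_span_of_forall_not_root e hroot)]
    simp only [Nat.even_add_one, ite_not, ← even_iff_two_dvd, Nat.cast_ite, Nat.cast_one,
      Nat.cast_zero]

omit [Fact p.Prime] in
include e in
theorem idealCount_eq_sum_divisors (hc : l + 1 = 4 * c) {n : ℕ} (hn : n ≠ 0) :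
    (idealCount R n : ℤ) = ∑ d ∈ n.divisors, quadraticChar (ZMod l) d := by
  induction n using Nat.recOnPosPrimePosCoprime with
  | zero => exact absurd rfl hn
  | one => simp [idealCount, Ideal.absNorm_eq_one_iff]
  | prime_pow p k hp =>
    have := Fact.mk hp
    rw [idealCount_prime_pow e hc k, Nat.sum_divisors_prime_pow hp]
    exact Finset.sum_congr rfl fun i _ => by rw [Nat.cast_pow, map_pow]
  | coprime a b ha hb hab iha ihb =>
    rw [idealCount_mul hab, Nat.cast_mul, iha (by omega), ihb (by omega), Nat.divisors_mul,
      Finset.mul_def, Finset.sum_image hab.mul_injOn_divisors, Finset.sum_product,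
      Finset.sum_mul_sum]
    simp only [Nat.cast_mul, map_mul]

end QuadraticOrder

section QuadraticField

variable {l : ℕ}

lemma exists_int_of_isIntegral_ratCast {q : ℚ} (h : IsIntegral ℤ (q : ℂ)) : ∃ n : ℤ, q = n := by
  rw [← eq_ratCast (algebraMap ℚ ℂ) q,
    isIntegral_algebraMap_iff (algebraMap ℚ ℂ).injective] at h
  obtain ⟨n, hn⟩ := IsIntegrallyClosed.isIntegral_iff.1 h
  exact ⟨n, by simpa using hn.symm⟩

lemma conj_sqrtNeg (m : ℕ) : starRingEnd ℂ (sqrtNeg m) = -sqrtNeg m := by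
  simp [sqrtNeg]

lemma eq_zero_of_add_mul_sqrtNeg_eq_zero {m : ℕ} (hm : 0 < m) {u v : ℝ}
    (h : (u : ℂ) + v * sqrtNeg m = 0) : u = 0 ∧ v = 0 := by
  have re_eq := congrArg Complex.re h
  have im_eq := congrArg Complex.im h
  simp only [sqrtNeg, add_re, ofReal_re, mul_re, mul_im, ofReal_im, I_re, I_im, zero_re, add_im,
    zero_im] at re_eq im_eq
  have sqrt_ne : Real.sqrt m ≠ 0 := by positivity
  exact ⟨by linarith, (mul_eq_zero.1 (by linarith : v * Real.sqrt m = 0)).resolve_right sqrt_ne⟩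

lemma exists_int_of_prime_mul_sq (hl : l.Prime) {w : ℚ} {n : ℤ} (h : (l : ℚ) * w ^ 2 = n) :
    ∃ k : ℤ, w = k := by
  have sq_eq : (l * w) ^ 2 = ((l * n : ℤ) : ℚ) := by
    push_cast
    rw [← h]
    ring
  have integral : IsIntegral ℤ ((l : ℚ) * w) := by
    refine IsIntegral.of_pow two_pos ?_
    rw [sq_eq]
    exact isIntegral_algebraMap (A := ℚ) (x := (l * n : ℤ))
  obtain ⟨k, hk⟩ := IsIntegrallyClosed.isIntegral_iff.1 integral
  rw [algebraMap_int_eq, eq_intCast] at hk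
  rw [← hk] at sq_eq
  obtain ⟨m, rfl⟩ := (Nat.prime_iff_prime_int.1 hl).dvd_of_dvd_pow
    (Dvd.intro n (by exact_mod_cast sq_eq.symm) : (l : ℤ) ∣ k ^ 2)
  push_cast at hk
  exact ⟨m, (mul_left_cancel₀ (Nat.cast_ne_zero.2 hl.ne_zero) hk).symm⟩

lemma exists_trace_norm_of_isIntegral (hl : l.Prime) {u v : ℚ}
    (h : IsIntegral ℤ ((u : ℂ) + v * sqrtNeg l)) :
    ∃ m w n : ℤ, 2 * u = m ∧ 2 * v = w ∧ m ^ 2 + l * w ^ 2 = 4 * n := by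
  have conj_integral : IsIntegral ℤ ((u : ℂ) - v * sqrtNeg l) := by
    simpa [conj_sqrtNeg, sub_eq_add_neg] using h.map (starRingEnd ℂ).toIntAlgHom
  have trace_integral : IsIntegral ℤ ((2 * u : ℚ) : ℂ) := by
    rw [show ((2 * u : ℚ) : ℂ) = (u + v * sqrtNeg l) + (u - v * sqrtNeg l) by push_cast; ring]
    exact h.add conj_integral
  have norm_integral : IsIntegral ℤ ((u ^ 2 + l * v ^ 2 : ℚ) : ℂ) := by
    rw [show ((u ^ 2 + l * v ^ 2 : ℚ) : ℂ) = (u + v * sqrtNeg l) * (u - v * sqrtNeg l) by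
      push_cast
      linear_combination (v : ℂ) ^ 2 * sqrtNeg_sq l]
    exact h.mul conj_integral
  obtain ⟨m, hm⟩ := exists_int_of_isIntegral_ratCast trace_integral
  obtain ⟨n, hn⟩ := exists_int_of_isIntegral_ratCast norm_integral
  obtain ⟨w, hw⟩ := exists_int_of_prime_mul_sq hl (w := 2 * v) (n := 4 * n - m ^ 2) (by
    push_cast
    rw [← hn, ← hm]
    ring)
  refine ⟨m, w, n, hm, hw, ?_⟩
  rw [← Int.cast_inj (α := ℚ)]
  push_cast
  rw [← hn, ← hm, ← hw]
  ring

lemma exists_eq_add_mul_half_of_isIntegral (hl : l.Prime) (hodd : Odd l) {u v : ℚ}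
    (h : IsIntegral ℤ ((u : ℂ) + v * sqrtNeg l)) :
    ∃ a b : ℤ, (u : ℂ) + v * sqrtNeg l = a + b * ((1 + sqrtNeg l) / 2) := by
  obtain ⟨m, w, n, hm, hw, hmn⟩ := exists_trace_norm_of_isIntegral hl h
  have parity : Even (m - w) := by
    have even_norm : Even (m ^ 2 + l * w ^ 2) := ⟨2 * n, by linarith⟩
    have l_odd : ¬Even (l : ℤ) := by rwa [Int.not_even_iff_odd, Int.odd_coe_nat]
    rw [Int.even_add, Int.even_mul, Int.even_pow' two_ne_zero, Int.even_pow' two_ne_zero]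
      at even_norm
    rw [Int.even_sub]
    tauto
  obtain ⟨d, hd⟩ := parity
  refine ⟨d, w, ?_⟩
  have hm' : (2 : ℂ) * u = m := by exact_mod_cast congrArg (Rat.cast : ℚ → ℂ) hm
  have hw' : (2 : ℂ) * v = w := by exact_mod_cast congrArg (Rat.cast : ℚ → ℂ) hw
  have hd' : (m : ℂ) - w = d + d := by exact_mod_cast congrArg (Int.cast : ℤ → ℂ) hd
  linear_combination (1 / 2 : ℂ) * hm' + (1 / 2 : ℂ) * sqrtNeg l * hw' + (1 / 2 : ℂ) * hd'

lemma exists_rat_of_mem_adjoin_sqrtNeg {m : ℕ} {x : ℂ} (hx : x ∈ ℚ⟮sqrtNeg m⟯) :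
    ∃ u v : ℚ, x = u + v * sqrtNeg m := by
  rw [← IntermediateField.mem_toSubalgebra,
    IntermediateField.adjoin_simple_toSubalgebra_of_isAlgebraic
      (isIntegral_sqrtNeg m).isAlgebraic] at hx
  induction hx using Algebra.adjoin_induction with
  | mem x hx => exact ⟨0, 1, by simp [Set.mem_singleton_iff.1 hx]⟩
  | algebraMap r => exact ⟨r, 0, by simp⟩
  | add x y _ _ hx hy =>
    obtain ⟨⟨u, v, rfl⟩, ⟨u', v', rfl⟩⟩ := hx, hy
    exact ⟨u + u', v + v', by push_cast; ring⟩
  | mul x y _ _ hx hy =>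
    obtain ⟨⟨u, v, rfl⟩, ⟨u', v', rfl⟩⟩ := hx, hy
    exact ⟨u * u' - m * v * v', u * v' + v * u', by
      push_cast
      linear_combination v * v' * sqrtNeg_sq m⟩

instance numberField_adjoin_sqrtNeg (m : ℕ) : NumberField ℚ⟮sqrtNeg m⟯ :=
  haveI : FiniteDimensional ℚ ℚ⟮sqrtNeg m⟯ :=
    IntermediateField.adjoin.finiteDimensional (isIntegral_sqrtNeg m)
  haveI : CharZero ℚ⟮sqrtNeg m⟯ :=
    charZero_of_injective_algebraMap (algebraMap ℚ ℚ⟮sqrtNeg m⟯).injective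
  ⟨⟩

lemma classNumSqrtNeg_eq (m : ℕ) :
    classNumSqrtNeg m = NumberField.classNumber ℚ⟮sqrtNeg m⟯ := rfl

open NumberField

lemma half_one_add_sqrtNeg_sq {c : ℕ} (hc : l + 1 = 4 * c) :
    ((1 + sqrtNeg l) / 2) ^ 2 - (1 + sqrtNeg l) / 2 + c = 0 := by
  have hc' : (l : ℂ) + 1 = 4 * c := by exact_mod_cast congrArg (Nat.cast : ℕ → ℂ) hc
  linear_combination (1 / 4 : ℂ) * sqrtNeg_sq l - (1 / 4 : ℂ) * hc'

lemma exists_half_one_add_sqrtNeg {c : ℕ} (hc : l + 1 = 4 * c) :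
    ∃ θ : 𝓞 ℚ⟮sqrtNeg l⟯, ((θ : ℚ⟮sqrtNeg l⟯) : ℂ) = (1 + sqrtNeg l) / 2 := by
  have mem : (1 + sqrtNeg l) / 2 ∈ ℚ⟮sqrtNeg l⟯ :=
    div_mem (add_mem (one_mem _) (mem_adjoin_simple_self ℚ _)) (ofNat_mem _ 2)
  have integral : IsIntegral ℤ ((1 + sqrtNeg l) / 2) := by
    refine ⟨X ^ 2 - X + C (c : ℤ), by monicity!, ?_⟩
    simpa using half_one_add_sqrtNeg_sq hc
  have integral_K : IsIntegral ℤ (⟨_, mem⟩ : ℚ⟮sqrtNeg l⟯) :=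
    (isIntegral_algebraMap_iff (algebraMap ℚ⟮sqrtNeg l⟯ ℂ).injective).1 integral
  exact ⟨⟨_, integral_K⟩, rfl⟩

lemma ringOfIntegers_coe_injective (m : ℕ) :
    Function.Injective fun x : 𝓞 ℚ⟮sqrtNeg m⟯ => ((x : ℚ⟮sqrtNeg m⟯) : ℂ) :=
  Subtype.val_injective.comp RingOfIntegers.coe_injective

theorem nonempty_quadraticAlgebra_ringEquiv_ringOfIntegers {c : ℕ} (hl : l.Prime)
    (hc : l + 1 = 4 * c) :
    Nonempty (QuadraticAlgebra ℤ (-(c : ℤ)) 1 ≃+* 𝓞 ℚ⟮sqrtNeg l⟯) := by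
  obtain ⟨θ, hθ⟩ := exists_half_one_add_sqrtNeg hc
  have θ_sq : θ * θ = (-(c : ℤ)) • (1 : 𝓞 ℚ⟮sqrtNeg l⟯) + (1 : ℤ) • θ := by
    apply ringOfIntegers_coe_injective
    simp [hθ]
    linear_combination half_one_add_sqrtNeg_sq hc
  let φ : QuadraticAlgebra ℤ (-(c : ℤ)) 1 →ₐ[ℤ] 𝓞 ℚ⟮sqrtNeg l⟯ := QuadraticAlgebra.lift ⟨θ, θ_sq⟩
  have φ_apply (z) : ((φ z : ℚ⟮sqrtNeg l⟯) : ℂ) = z.re + z.im * ((1 + sqrtNeg l) / 2) := by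
    simp [φ, hθ]
  refine ⟨RingEquiv.ofBijective φ ⟨(injective_iff_map_eq_zero _).2 fun z hz => ?_, fun x => ?_⟩⟩
  · have h0 := φ_apply z
    rw [hz] at h0
    simp only [map_zero, ZeroMemClass.coe_zero] at h0
    obtain ⟨re_add, im_half⟩ := eq_zero_of_add_mul_sqrtNeg_eq_zero (m := l) hl.pos
      (u := z.re + z.im / 2) (v := z.im / 2) (by push_cast; linear_combination -h0)
    have im_zero : (z.im : ℝ) = 0 := by linarith
    have re_zero : (z.re : ℝ) = 0 := by linarith
    exact QuadraticAlgebra.ext (by exact_mod_cast re_zero) (by exact_mod_cast im_zero)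
  · obtain ⟨u, v, huv⟩ := exists_rat_of_mem_adjoin_sqrtNeg (x : ℚ⟮sqrtNeg l⟯).2
    have integral : IsIntegral ℤ ((x : ℚ⟮sqrtNeg l⟯) : ℂ) :=
      (RingOfIntegers.isIntegral_coe x).map (algebraMap ℚ⟮sqrtNeg l⟯ ℂ).toIntAlgHom
    rw [huv] at integral
    obtain ⟨a, b, hab⟩ :=
      exists_eq_add_mul_half_of_isIntegral hl (Nat.odd_iff.2 (by omega)) integral
    refine ⟨⟨a, b⟩, ringOfIntegers_coe_injective l ?_⟩
    change ((φ ⟨a, b⟩ : ℚ⟮sqrtNeg l⟯) : ℂ) = ((x : ℚ⟮sqrtNeg l⟯) : ℂ)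
    rw [φ_apply, huv, hab]

end QuadraticField

section ClassNumberFormula

open NumberField NumberField.InfinitePlace NumberField.Units
open scoped QuadraticAlgebra

lemma quadraticAlgebra_basis_zero (a b : ℤ) : QuadraticAlgebra.basis a b 0 = 1 := by
  apply (QuadraticAlgebra.basis a b).repr.injective
  ext i
  fin_cases i <;> simp [QuadraticAlgebra.re_one, QuadraticAlgebra.im_one]

lemma quadraticAlgebra_basis_one (a b : ℤ) : QuadraticAlgebra.basis a b 1 = ω := by
  apply (QuadraticAlgebra.basis a b).repr.injective
  ext i
  fin_cases i <;> simp

lemma trace_quadraticAlgebra (a b : ℤ) (z : QuadraticAlgebra ℤ a b) :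
    Algebra.trace ℤ _ z = 2 * z.re + b * z.im := by
  rw [Algebra.trace_eq_matrix_trace (QuadraticAlgebra.basis a b), Matrix.trace_fin_two,
    Algebra.leftMulMatrix_eq_repr_mul, Algebra.leftMulMatrix_eq_repr_mul,
    quadraticAlgebra_basis_zero, quadraticAlgebra_basis_one]
  simp only [mul_one, Fin.isValue, QuadraticAlgebra.basis_repr_apply, Nat.succ_eq_add_one,
    Nat.reduceAdd, Matrix.cons_val_zero, QuadraticAlgebra.re_mul, QuadraticAlgebra.omega_re,
    mul_zero, QuadraticAlgebra.omega_im, zero_add, QuadraticAlgebra.im_mul, add_zero,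
    Matrix.cons_val_one, Matrix.cons_val_fin_one]
  ring

lemma discr_quadraticAlgebra_basis (a b : ℤ) :
    Algebra.discr ℤ (QuadraticAlgebra.basis a b) = b ^ 2 + 4 * a := by
  rw [Algebra.discr_def, Matrix.det_fin_two]
  simp only [Algebra.traceMatrix_apply, Algebra.traceForm_apply, trace_quadraticAlgebra,
    quadraticAlgebra_basis_zero, quadraticAlgebra_basis_one]
  simp [QuadraticAlgebra.re_one, QuadraticAlgebra.im_one]
  ring

lemma eq_one_or_neg_one_of_isUnit {c : ℕ} (hc : 2 ≤ c) {z : QuadraticAlgebra ℤ (-(c : ℤ)) 1}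
    (hz : IsUnit z) : z = 1 ∨ z = -1 := by
  have norm_unit := QuadraticAlgebra.isUnit_iff_norm_isUnit.1 hz
  rw [Int.isUnit_iff, QuadraticAlgebra.norm_def] at norm_unit
  have hc' : (2 : ℤ) ≤ c := by exact_mod_cast hc
  have form_le : (2 * z.re + z.im) ^ 2 + (4 * c - 1) * z.im ^ 2 ≤ 4 := by
    rcases norm_unit with h | h <;> nlinarith
  have im_zero : z.im = 0 := by
    by_contra h
    have : 0 < z.im ^ 2 := by positivity
    nlinarith [sq_nonneg (2 * z.re + z.im)]
  have re_mul_self : z.re * z.re = 1 := by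
    rw [im_zero] at norm_unit
    rcases norm_unit with h | h <;> nlinarith [sq_nonneg z.re]
  refine (mul_self_eq_one_iff.1 re_mul_self).imp (fun h => ?_) fun h => ?_ <;>
    ext <;> simp [h, im_zero, QuadraticAlgebra.re_one, QuadraticAlgebra.im_one]

lemma torsionOrder_eq_two_of_units {K : Type*} [Field K] [NumberField K]
    (h : ∀ u : (𝓞 K)ˣ, u = 1 ∨ u = -1) : torsionOrder K = 2 := by
  have one_ne : (1 : (𝓞 K)ˣ) ≠ -1 := fun heq => by
    have := congrArg (fun u : (𝓞 K)ˣ => ((u : 𝓞 K) : K)) heq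
    norm_num at this
  have neg_one_mem : (-1 : (𝓞 K)ˣ) ∈ torsion K := by
    rw [torsion, CommGroup.mem_torsion, isOfFinOrder_iff_pow_eq_one]
    exact ⟨2, two_pos, by simp⟩
  rw [torsionOrder, Nat.card_eq_two_iff]
  refine ⟨1, ⟨-1, neg_one_mem⟩, fun heq => one_ne (congrArg Subtype.val heq), ?_⟩
  rw [Set.eq_univ_iff_forall]
  rintro ⟨u, hu⟩
  exact (h u).imp Subtype.ext Subtype.ext

variable {l c : ℕ}

lemma discr_adjoin_sqrtNeg (hl : l.Prime) (hc : l + 1 = 4 * c) : discr ℚ⟮sqrtNeg l⟯ = -l := by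
  obtain ⟨e⟩ := nonempty_quadraticAlgebra_ringEquiv_ringOfIntegers hl hc
  let e' : QuadraticAlgebra ℤ (-(c : ℤ)) 1 ≃ₐ[ℤ] 𝓞 ℚ⟮sqrtNeg l⟯ :=
    AlgEquiv.ofRingEquiv (f := e) fun _ => by simp
  let b := QuadraticAlgebra.basis (-(c : ℤ)) 1
  have b_map : ⇑(b.map e'.toLinearEquiv) = e' ∘ b := by
    ext i
    simp
  have : (l : ℤ) + 1 = 4 * c := by exact_mod_cast hc
  rw [← discr_eq_discr _ (b.map e'.toLinearEquiv), b_map,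
    ← Algebra.discr_eq_discr_of_algEquiv, discr_quadraticAlgebra_basis]
  linarith

lemma torsionOrder_adjoin_sqrtNeg (hl : l.Prime) (hc : l + 1 = 4 * c) (hc2 : 2 ≤ c) :
    torsionOrder ℚ⟮sqrtNeg l⟯ = 2 := by
  obtain ⟨e⟩ := nonempty_quadraticAlgebra_ringEquiv_ringOfIntegers hl hc
  refine torsionOrder_eq_two_of_units fun u => ?_
  refine (eq_one_or_neg_one_of_isUnit hc2 (u.isUnit.map e.symm)).imp (fun h => ?_) fun h => ?_
  · exact Units.ext (by simpa using congrArg e h)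
  · exact Units.ext (by simpa using congrArg e h)

lemma finrank_adjoin_sqrtNeg (hl : l.Prime) (hc : l + 1 = 4 * c) :
    Module.finrank ℚ ℚ⟮sqrtNeg l⟯ = 2 := by
  obtain ⟨e⟩ := nonempty_quadraticAlgebra_ringEquiv_ringOfIntegers hl hc
  rw [← RingOfIntegers.rank, finrank_eq_two_of_quadratic e]

lemma nrRealPlaces_adjoin_sqrtNeg (hl : 0 < l) : nrRealPlaces ℚ⟮sqrtNeg l⟯ = 0 := by
  have : IsTotallyComplex ℚ⟮sqrtNeg l⟯ := by
    refine ⟨fun w => not_isReal_iff_isComplex.1 fun hw => ?_⟩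
    let s : ℚ⟮sqrtNeg l⟯ := IntermediateField.AdjoinSimple.gen ℚ (sqrtNeg l)
    have s_sq : s ^ 2 = -(l : ℚ⟮sqrtNeg l⟯) := by
      apply (algebraMap ℚ⟮sqrtNeg l⟯ ℂ).injective
      rw [map_pow, IntermediateField.AdjoinSimple.algebraMap_gen, sqrtNeg_sq]
      simp
    have real_sq := congrArg (embedding_of_isReal hw) s_sq
    rw [map_pow, map_neg, map_natCast] at real_sq
    have hl' : (0 : ℝ) < l := by exact_mod_cast hl
    nlinarith [sq_nonneg (embedding_of_isReal hw s)]
  exact IsTotallyComplex.nrRealPlaces_eq_zero _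

lemma nrComplexPlaces_adjoin_sqrtNeg (hl : l.Prime) (hc : l + 1 = 4 * c) :
    nrComplexPlaces ℚ⟮sqrtNeg l⟯ = 1 := by
  have := card_add_two_mul_card_eq_rank ℚ⟮sqrtNeg l⟯
  rw [nrRealPlaces_adjoin_sqrtNeg hl.pos, finrank_adjoin_sqrtNeg hl hc] at this
  omega

lemma regulator_eq_one_of_rank_eq_zero {K : Type*} [Field K] [NumberField K] (h : rank K = 0) :
    regulator K = 1 := by
  have : IsEmpty {w : InfinitePlace K // w ≠ dirichletUnitTheorem.w₀} := by
    rw [(equivFinRank K).symm.isEmpty_congr, h]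
    infer_instance
  rw [regulator_eq_det']
  simp

lemma regulator_adjoin_sqrtNeg (hl : l.Prime) (hc : l + 1 = 4 * c) :
    regulator ℚ⟮sqrtNeg l⟯ = 1 := by
  apply regulator_eq_one_of_rank_eq_zero
  rw [rank, card_eq_nrRealPlaces_add_nrComplexPlaces, nrRealPlaces_adjoin_sqrtNeg hl.pos,
    nrComplexPlaces_adjoin_sqrtNeg hl hc]

lemma dedekindZeta_residue_adjoin_sqrtNeg (hl : l.Prime) (hc : l + 1 = 4 * c) (hc2 : 2 ≤ c) :
    dedekindZeta_residue ℚ⟮sqrtNeg l⟯ = Real.pi * classNumSqrtNeg l / Real.sqrt l := by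
  rw [dedekindZeta_residue_def, nrRealPlaces_adjoin_sqrtNeg hl.pos,
    nrComplexPlaces_adjoin_sqrtNeg hl hc, regulator_adjoin_sqrtNeg hl hc,
    torsionOrder_adjoin_sqrtNeg hl hc hc2, discr_adjoin_sqrtNeg hl hc, classNumSqrtNeg_eq]
  simp only [pow_zero, pow_one, one_mul, mul_one, Nat.cast_ofNat, Int.cast_neg, Int.cast_natCast,
    abs_neg, Nat.abs_cast]
  field_simp

variable [Fact l.Prime]

lemma dedekindZeta_adjoin_sqrtNeg (hc : l + 1 = 4 * c) {s : ℂ} (hs : 1 < s.re) :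
    dedekindZeta ℚ⟮sqrtNeg l⟯ s = (legendreChar l).LFunction s * riemannZeta s := by
  obtain ⟨e⟩ := nonempty_quadraticAlgebra_ringEquiv_ringOfIntegers (Fact.out : l.Prime) hc
  rw [DirichletCharacter.LFunction_eq_LSeries _ hs, ← LSeries_one_eq_riemannZeta hs,
    ← LSeries_convolution' (DirichletCharacter.LSeriesSummable_of_one_lt_re (legendreChar l) hs)
      (LSeriesSummable_one_iff.2 hs), dedekindZeta]
  refine LSeries_congr (fun {n} hn => ?_) s
  have count_eq := congrArg (Int.cast : ℤ → ℂ) (idealCount_eq_sum_divisors e hc hn)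
  rw [Int.cast_natCast, Int.cast_sum, idealCount] at count_eq
  rw [LSeries.convolution_def, count_eq]
  simp only [Pi.one_apply, mul_one]
  rw [Nat.sum_divisorsAntidiagonal (fun d _ => legendreChar l (d : ZMod l))]
  rfl

open Filter Topology

lemma tendsto_ofReal_nhdsGT_one : Tendsto ((↑) : ℝ → ℂ) (𝓝[>] 1) (𝓝[≠] 1) := by
  refine tendsto_nhdsWithin_of_tendsto_nhds_of_eventually_within _
    ((continuous_ofReal.tendsto' 1 1 ofReal_one).mono_left nhdsWithin_le_nhds) ?_
  filter_upwards [self_mem_nhdsWithin] with s hs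
  exact ofReal_ne_one.2 (ne_of_gt hs)

lemma LFunction_legendreChar_one_eq_residue (hc : l + 1 = 4 * c) :
    (legendreChar l).LFunction 1 = dedekindZeta_residue ℚ⟮sqrtNeg l⟯ := by
  have L_tendsto := ((DirichletCharacter.differentiable_LFunction
    (legendreChar_ne_one (l := l) (by omega))).continuous.tendsto 1).comp
      (tendsto_ofReal_nhdsGT_one.mono_right nhdsWithin_le_nhds)
  have product_tendsto := L_tendsto.mul (riemannZeta_residue_one.comp tendsto_ofReal_nhdsGT_one)
  rw [mul_one] at product_tendsto
  refine tendsto_nhds_unique_of_eventuallyEq product_tendsto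
    (tendsto_sub_one_mul_dedekindZeta_nhdsGT ℚ⟮sqrtNeg l⟯) ?_
  filter_upwards [self_mem_nhdsWithin] with s hs
  rw [dedekindZeta_adjoin_sqrtNeg hc (by simpa using hs)]
  simp only [Function.comp_apply]
  ring

theorem classNumSqrtNeg_mul_eq_abs_legendreMoment (hc : l + 1 = 4 * c) (hc2 : 2 ≤ c) :
    (classNumSqrtNeg l : ℤ) * l = |legendreMoment l| := by
  have hl : l.Prime := Fact.out
  have norm_eq := congrArg norm (LFunction_legendreChar_one_eq_residue hc)
  rw [norm_LFunction_legendreChar_one (by omega), dedekindZeta_residue_adjoin_sqrtNeg hl hc hc2,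
    norm_real, Real.norm_of_nonneg (by positivity)] at norm_eq
  have l_pos : (0 : ℝ) < l := by exact_mod_cast hl.pos
  have : 0 < Real.sqrt l := Real.sqrt_pos.2 l_pos
  have := Real.pi_pos
  have real_eq : ((classNumSqrtNeg l : ℤ) * l : ℝ) = |(legendreMoment l : ℝ)| := by
    field_simp at norm_eq
    push_cast at norm_eq ⊢
    linarith
  exact_mod_cast real_eq

end ClassNumberFormula

section Places

open IsLocalRing

variable {K : Type*} [Field K]

lemma exists_valuationSubring_natCast_lt_one [CharZero K] {p : ℕ} (hp : p.Prime) :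
    ∃ V : ValuationSubring K, V.valuation (p : K) < 1 := by
  let A : Subring K := (Int.castRingHom K).range
  have p_ne_top : Ideal.span {(p : A)} ≠ ⊤ := fun h => by
    rw [Ideal.span_singleton_eq_top, isUnit_iff_exists_inv] at h
    obtain ⟨⟨b, n, rfl⟩, hb⟩ := h
    have mul_eq_one : (p : K) * (n : K) = 1 := by simpa using congrArg Subtype.val hb
    exact (Nat.prime_iff_prime_int.1 hp).not_isUnit (isUnit_iff_exists_inv.2
      ⟨n, by exact_mod_cast mul_eq_one⟩)
  obtain ⟨V, _, hV⟩ := Ideal.image_subset_nonunits_valuationSubring _ p_ne_top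
  exact ⟨V, (ValuationSubring.mem_nonunits_iff V).1
    (hV ⟨(p : A), Ideal.mem_span_singleton_self _, by simp⟩)⟩

variable {V : ValuationSubring K}

lemma valuation_le_one_of_isIntegral {x : K} (hx : IsIntegral ℤ x) : V.valuation x ≤ 1 := by
  obtain ⟨y, rfl⟩ := IsIntegrallyClosed.isIntegral_iff.1 (hx.tower_top : IsIntegral V x)
  exact V.valuation_le_one y

lemma valuation_eq_one_of_pow_eq_one {x : K} {n : ℕ} (hn : n ≠ 0) (hx : x ^ n = 1) :
    V.valuation x = 1 := by
  have pow_eq := congrArg V.valuation hx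
  rw [map_pow, map_one] at pow_eq
  exact (pow_eq_one_iff.1 pow_eq).resolve_right hn

variable {p : ℕ}

lemma charP_residueField (hp : p.Prime) (hV : V.valuation (p : K) < 1) :
    CharP (ResidueField V) p := by
  refine (CharP.charP_iff_prime_eq_zero hp).2 ?_
  rw [← map_natCast (residue V), residue_eq_zero_iff, ValuationSubring.valuation_lt_one_iff]
  simpa using hV

lemma valuation_intCast_eq_one (hp : p.Prime) (hV : V.valuation (p : K) < 1) {n : ℤ}
    (hn : ¬(p : ℤ) ∣ n) : V.valuation (n : K) = 1 := by
  have := charP_residueField hp hV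
  have residue_ne_zero : residue V n ≠ 0 := by rwa [map_intCast, Ne, CharP.intCast_eq_zero_iff _ p]
  simpa using (ValuationSubring.valuation_eq_one_iff V _).1
    ((residue_ne_zero_iff_isUnit _).1 residue_ne_zero)

lemma pow_dvd_of_valuation_le [CharZero K] (hp : p.Prime) (hV : V.valuation (p : K) < 1) {n : ℤ}
    {e : ℕ} (h : V.valuation (n : K) ≤ V.valuation (p : K) ^ e) : (p : ℤ) ^ e ∣ n := by
  have p_pos : 0 < V.valuation (p : K) :=
    zero_lt_iff.2 ((Valuation.ne_zero_iff _).2 (Nat.cast_ne_zero.2 hp.ne_zero))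
  induction e generalizing n with
  | zero => simp
  | succ e ih =>
    have dvd : (p : ℤ) ∣ n := by
      by_contra hn
      rw [valuation_intCast_eq_one hp hV hn] at h
      exact h.not_gt (pow_lt_one₀ zero_le hV e.succ_ne_zero)
    obtain ⟨m, rfl⟩ := dvd
    rw [Int.cast_mul, Int.cast_natCast, map_mul, pow_succ'] at h
    rw [pow_succ']
    exact mul_dvd_mul_left _ (ih ((mul_le_mul_iff_right₀ p_pos).1 h))

lemma valuation_sub_one_lt_one_of_pow_eq_one (hp : p.Prime) (hV : V.valuation (p : K) < 1) {x : K}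
    {k : ℕ} (hx : x ^ p ^ k = 1) : V.valuation (x - 1) < 1 := by
  have := charP_residueField hp hV
  have := Fact.mk hp
  have mem : x ∈ V := V.mem_of_valuation_le_one x
    (valuation_eq_one_of_pow_eq_one (pow_ne_zero k hp.ne_zero) hx).le
  let y : V := ⟨x, mem⟩
  have y_pow : y ^ p ^ k = 1 := Subtype.ext hx
  have residue_eq_one : residue V y = 1 := by
    apply iterateFrobenius_inj (ResidueField V) p k
    rw [iterateFrobenius_def, ← map_pow, y_pow, map_one, map_one]
  have sub_mem : y - 1 ∈ maximalIdeal V := by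
    rw [← residue_eq_zero_iff, map_sub, residue_eq_one, map_one, sub_self]
  exact (ValuationSubring.valuation_lt_one_iff V (y - 1)).1 sub_mem

end Places

section GaussSums

variable {F : Type*} [Field F]

lemma isIntegral_mulChar [Finite F] (χ : MulChar F ℂ) (x : F) : IsIntegral ℤ (χ x) := by
  by_cases hx : x = 0
  · rw [hx, MulChar.map_zero]
    exact isIntegral_zero
  · cases nonempty_fintype F
    refine IsIntegral.of_pow (n := Fintype.card F - 1)
      (Nat.sub_pos_of_lt Fintype.one_lt_card) ?_
    rw [← map_pow, FiniteField.pow_card_sub_one_eq_one x hx, map_one]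
    exact isIntegral_one

variable (p : ℕ) [Fact p.Prime]

lemma isPrimitiveRoot_zetaP : IsPrimitiveRoot (zetaP p) p :=
  Complex.isPrimitiveRoot_exp p (NeZero.ne p)

lemma isIntegral_zetaP : IsIntegral ℤ (zetaP p) :=
  (isPrimitiveRoot_zetaP p).isIntegral (NeZero.pos p)

lemma stdAddChar_eq_zetaP_pow (j : ZMod p) : ZMod.stdAddChar j = zetaP p ^ j.val := by
  rw [ZMod.stdAddChar_apply, ZMod.toCircle_apply, zetaP, ← Complex.exp_nat_mul]
  congr 1
  ring

variable (F) [Algebra (ZMod p) F]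

/-- The canonical additive character `x ↦ ζ_p ^ Tr(x)` of a finite field of characteristic `p`,
which turns `gaussSumN` into an instance of `gaussSum`. -/
noncomputable def traceChar : AddChar F ℂ :=
  (ZMod.stdAddChar (N := p)).compAddMonoidHom (Algebra.trace (ZMod p) F).toAddMonoidHom

variable {F}

lemma traceChar_apply (x : F) :
    traceChar F p x = zetaP p ^ (Algebra.trace (ZMod p) F x).val :=
  stdAddChar_eq_zetaP_pow p _

lemma traceChar_ne_one [Finite F] : traceChar F p ≠ 1 := by
  intro h
  obtain ⟨x, hx⟩ := Algebra.trace_surjective (ZMod p) F 1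
  have at_one : ZMod.stdAddChar (1 : ZMod p) = ZMod.stdAddChar (0 : ZMod p) := by
    rw [AddChar.map_zero_eq_one, ← hx]
    exact DFunLike.congr_fun h x
  exact one_ne_zero (ZMod.injective_stdAddChar at_one)

lemma traceChar_isPrimitive [Finite F] : (traceChar F p).IsPrimitive :=
  AddChar.IsPrimitive.of_ne_one (traceChar_ne_one p)

lemma traceChar_pow_prime [Finite F] (x : F) : traceChar F p (x ^ p) = traceChar F p x := by
  have trace_pow : Algebra.trace (ZMod p) F (x ^ p) = Algebra.trace (ZMod p) F x := by
    simpa using Algebra.trace_eq_of_algEquiv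
      (FiniteField.frobeniusAlgEquivOfAlgebraic (ZMod p) F) x
  rw [traceChar_apply, traceChar_apply, trace_pow]

variable [Fintype F]

lemma isIntegral_jacobiSum (χ ψ : MulChar F ℂ) : IsIntegral ℤ (jacobiSum χ ψ) :=
  IsIntegral.sum _ fun _ _ => (isIntegral_mulChar χ _).mul (isIntegral_mulChar ψ _)

lemma gaussSum_pow_prime (χ : MulChar F ℂ) :
    gaussSum (χ ^ p) (traceChar F p) = gaussSum χ (traceChar F p) := by
  let frob := FiniteField.frobeniusAlgEquivOfAlgebraic (ZMod p) F
  rw [gaussSum, gaussSum, ← frob.toEquiv.sum_comp fun x => χ x * traceChar F p x]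
  refine Finset.sum_congr rfl fun x _ => ?_
  have frob_apply : frob.toEquiv x = x ^ p := by simp [frob]
  rw [frob_apply, traceChar_pow_prime, MulChar.pow_apply' χ (NeZero.ne p), map_pow]

lemma isIntegral_gaussSum (χ : MulChar F ℂ) : IsIntegral ℤ (gaussSum χ (traceChar F p)) := by
  refine IsIntegral.sum _ fun x _ => (isIntegral_mulChar χ x).mul ?_
  rw [traceChar_apply]
  exact (isIntegral_zetaP p).pow _

lemma valuation_gaussSum_mul {V : ValuationSubring ℂ} {χ : MulChar F ℂ} (hχ : χ ≠ 1) :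
    V.valuation (gaussSum χ (traceChar F p)) * V.valuation (gaussSum χ⁻¹ (traceChar F p)) =
      V.valuation (Fintype.card F : ℂ) := by
  have neg_one : V.valuation (χ⁻¹ (-1)) = 1 :=
    valuation_eq_one_of_pow_eq_one two_ne_zero (by rw [← map_pow]; simp)
  rw [← gaussSum_mul_gaussSum_eq_card hχ (traceChar_isPrimitive p),
    ← mul_gaussSum_inv_eq_gaussSum χ⁻¹, map_mul, map_mul, neg_one, one_mul]

lemma gaussSumN_eq_gaussSum {F : Type} [Field F] [Fintype F] [Algebra (ZMod p) F]
    (χ : MulChar F ℂ) (n : ℕ) : gaussSumN p χ n = gaussSum (χ ^ n) (traceChar F p) := by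
  classical
  simp only [gaussSumN, gaussSum, traceChar_apply]
  rw [Finset.sum_filter]
  refine Finset.sum_congr (by congr) fun x _ => ?_
  by_cases hx : x = 0
  · rw [if_neg (not_not.2 hx), hx, MulChar.map_zero, zero_mul]
  · rw [if_pos hx]

end GaussSums

section Teichmuller

open IsLocalRing

variable {V : ValuationSubring ℂ} {p : ℕ} {F : Type*} [Field F]

/-- `ω` is the Teichmüller lift of the embedding `σ` of `F` into the residue field of `V`: every
value `ω x` lies in `V` and reduces to `σ x`. -/
def IsTeichmullerLift (σ : F →+* ResidueField V) (ω : MulChar F ℂ) : Prop :=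
  ∀ x, ∃ y : V, (y : ℂ) = ω x ∧ residue V y = σ x

lemma IsTeichmullerLift.apply_eq_one_iff {σ : F →+* ResidueField V} {ω : MulChar F ℂ}
    (h : IsTeichmullerLift σ ω) {x : F} : ω x = 1 ↔ x = 1 := by
  refine ⟨fun hx => ?_, fun hx => hx ▸ map_one ω⟩
  obtain ⟨y, y_coe, y_residue⟩ := h x
  have y_eq : y = 1 := Subtype.ext (y_coe.trans hx)
  exact σ.injective (by rw [← y_residue, y_eq, map_one, map_one])

lemma IsTeichmullerLift.orderOf_eq [Fintype F] {σ : F →+* ResidueField V} {ω : MulChar F ℂ}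
    (h : IsTeichmullerLift σ ω) : orderOf ω = Fintype.card F - 1 := by
  classical
  obtain ⟨g, hg⟩ := IsCyclic.exists_generator (α := Fˣ)
  rw [← Fintype.card_units, ← Nat.card_eq_fintype_card, ← orderOf_eq_card_of_forall_mem_zpowers hg]
  refine orderOf_eq_orderOf_iff.2 fun n => ?_
  rw [MulChar.eq_iff hg, MulChar.pow_apply_coe, MulChar.one_apply_coe, ← map_pow,
    h.apply_eq_one_iff, ← Units.val_pow_eq_pow_val, Units.val_eq_one]

lemma exists_isPrimitiveRoot_residue {n : ℕ} (hn : (n : ResidueField V) ≠ 0) :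
    ∃ ζ : V, IsPrimitiveRoot ζ n ∧ IsPrimitiveRoot (residue V ζ) n := by
  have n_ne_zero : n ≠ 0 := by
    rintro rfl
    exact hn Nat.cast_zero
  have root := Complex.isPrimitiveRoot_exp n n_ne_zero
  let ζ : V := ⟨_, V.mem_of_valuation_le_one _
    (valuation_eq_one_of_pow_eq_one n_ne_zero root.pow_eq_one).le⟩
  have ζ_primitive : IsPrimitiveRoot ζ n :=
    IsPrimitiveRoot.of_map_of_injective (f := V.subtype) root Subtype.val_injective
  have := NeZero.mk hn
  refine ⟨ζ, ζ_primitive, isRoot_cyclotomic_iff.1 ?_⟩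
  have := (ζ_primitive.isRoot_cyclotomic (Nat.pos_of_ne_zero n_ne_zero)).map (f := residue V)
  rwa [map_cyclotomic] at this

variable [Fintype F]

lemma nonempty_ringHom_of_isPrimitiveRoot {p f : ℕ} [Fact p.Prime] [Algebra (ZMod p) F]
    (hcard : Fintype.card F = p ^ f) {k : Type*} [Field k] [CharP k p] {ζ : k}
    (hζ : IsPrimitiveRoot ζ (p ^ f - 1)) : Nonempty (F →+* k) := by
  let _ : Algebra (ZMod p) k := ZMod.algebra k p
  have := FiniteField.isSplittingField_of_card_eq p f hcard
  have card_eq : p ^ f = (p ^ f - 1) + 1 := (Nat.sub_add_cancel (pow_pos (NeZero.pos p) f)).symm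
  have splits : Splits ((X ^ p ^ f - X : (ZMod p)[X]).map (algebraMap (ZMod p) k)) := by
    have factor : (X ^ p ^ f - X : (ZMod p)[X]).map (algebraMap (ZMod p) k) =
        X * (X ^ (p ^ f - 1) - 1) := by
      rw [Polynomial.map_sub, Polynomial.map_pow, map_X, mul_sub, mul_one, ← pow_succ', ← card_eq]
    rw [factor]
    exact Splits.X.mul (X_pow_sub_one_splits hζ)
  exact ⟨(IsSplittingField.lift F _ splits).toRingHom⟩

lemma exists_isTeichmullerLift_of_isPrimitiveRoot (σ : F →+* ResidueField V) {ζ : V}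
    (hζ : IsPrimitiveRoot ζ (Fintype.card F - 1))
    (hζ' : IsPrimitiveRoot (residue V ζ) (Fintype.card F - 1)) :
    ∃ ω : MulChar F ℂ, IsTeichmullerLift σ ω := by
  classical
  obtain ⟨g, hg⟩ := IsCyclic.exists_generator (α := Fˣ)
  have : NeZero (Fintype.card F - 1) := ⟨Nat.sub_ne_zero_of_lt Fintype.one_lt_card⟩
  obtain ⟨i, -, hi⟩ := hζ'.eq_pow_of_pow_eq_one (ξ := σ g) (by
    rw [← map_pow, FiniteField.pow_card_sub_one_eq_one _ g.ne_zero, map_one])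
  have root_pow : ((ζ : ℂ) ^ i) ^ Fintype.card Fˣ = 1 := by
    rw [Fintype.card_units, ← pow_mul, mul_comm, pow_mul, ← SubmonoidClass.coe_pow,
      hζ.pow_eq_one, OneMemClass.coe_one, one_pow]
  let ω : MulChar F ℂ :=
    MulChar.ofRootOfUnity (rootsOfUnity.mkOfPowEq ((ζ : ℂ) ^ i) root_pow).2 hg
  have ω_g : ω g = (ζ : ℂ) ^ i :=
    (MulChar.ofRootOfUnity_spec _ hg).trans (rootsOfUnity.coe_mkOfPowEq root_pow)
  refine ⟨ω, fun x => ?_⟩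
  by_cases hx : x = 0
  · exact ⟨0, by rw [hx, MulChar.map_zero]; rfl, by rw [hx, map_zero, map_zero]⟩
  · obtain ⟨m, hm⟩ := mem_powers_iff_mem_zpowers.2 (hg (Units.mk0 x hx))
    have x_eq : x = (g : F) ^ m := (congrArg Units.val hm).symm
    refine ⟨(ζ ^ i) ^ m, ?_, ?_⟩
    · rw [x_eq, map_pow, ω_g, SubmonoidClass.coe_pow, SubmonoidClass.coe_pow]
    · rw [x_eq, map_pow, map_pow, map_pow, hi]

theorem exists_isTeichmullerLift {f : ℕ} [Fact p.Prime] [Algebra (ZMod p) F]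
    (hV : V.valuation (p : ℂ) < 1) (hcard : Fintype.card F = p ^ f) :
    ∃ (σ : F →+* ResidueField V) (ω : MulChar F ℂ), IsTeichmullerLift σ ω := by
  have := charP_residueField Fact.out hV
  have card_sub_one_ne_zero : ((Fintype.card F - 1 : ℕ) : ResidueField V) ≠ 0 := by
    have card_zero : ((Fintype.card F : ℕ) : ResidueField V) = 0 := by
      have f_ne_zero : f ≠ 0 := by
        rintro rfl
        exact Fintype.one_lt_card.ne' (hcard.trans (pow_zero p))
      rw [hcard, Nat.cast_pow, CharP.cast_eq_zero, zero_pow f_ne_zero]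
    rw [Nat.cast_sub Fintype.card_pos, card_zero]
    simp
  obtain ⟨ζ, hζ, hζ'⟩ := exists_isPrimitiveRoot_residue card_sub_one_ne_zero
  obtain ⟨σ⟩ := nonempty_ringHom_of_isPrimitiveRoot hcard (hcard ▸ hζ')
  exact ⟨σ, exists_isTeichmullerLift_of_isPrimitiveRoot σ hζ hζ'⟩

lemma sum_inv_mul_trace (K : Type*) [Field K] [Finite K] [Algebra K F] :
    ∑ x : F, x⁻¹ * algebraMap K F (Algebra.trace K F x) = -1 := by
  classical
  have card_eq : Fintype.card F = Nat.card K ^ Module.finrank K F := by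
    rw [← Nat.card_eq_fintype_card, Module.natCard_eq_pow_finrank (K := K)]
  have one_lt_card : 1 < Nat.card K := Finite.one_lt_card
  obtain ⟨n, hn⟩ := Nat.exists_eq_succ_of_ne_zero (Module.finrank_pos (R := K) (M := F)).ne'
  simp only [FiniteField.algebraMap_trace_eq_sum_pow, Finset.mul_sum]
  rw [Finset.sum_comm, hn, Finset.sum_range_succ', Finset.sum_eq_zero fun i hi => ?_, zero_add]
  · have inv_mul (x : F) : x⁻¹ * x = 1 - if x = 0 then 1 else 0 := by
      split_ifs with h <;> simp [h]
    simp only [pow_zero, pow_one]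
    simp [inv_mul]
  · have one_lt : 1 < Nat.card K ^ (i + 1) := Nat.one_lt_pow i.succ_ne_zero one_lt_card
    have lt_card : Nat.card K ^ (i + 1) < Fintype.card F := by
      rw [card_eq, hn]
      exact Nat.pow_lt_pow_right one_lt_card (Nat.succ_lt_succ (Finset.mem_range.1 hi))
    rw [← FiniteField.sum_pow_lt_card_sub_one F (Nat.card K ^ (i + 1) - 1) (by omega)]
    refine Finset.sum_congr rfl fun x _ => ?_
    by_cases hx : x = 0
    · rw [hx, inv_zero, zero_mul, zero_pow (by omega)]
    · rw [pow_sub₀ _ hx one_lt.le, pow_one, mul_comm]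

variable [Fact p.Prime] [Algebra (ZMod p) F]

lemma IsTeichmullerLift.valuation_sum_inv_mul_trace {σ : F →+* ResidueField V} {ω : MulChar F ℂ}
    (h : IsTeichmullerLift σ ω) :
    V.valuation (∑ x, ω⁻¹ x * (Algebra.trace (ZMod p) F x).val) = 1 := by
  choose y y_coe y_residue using h
  have sum_coe : ∑ x, ω⁻¹ x * (Algebra.trace (ZMod p) F x).val =
      ((∑ x, y x⁻¹ * (Algebra.trace (ZMod p) F x).val : V) : ℂ) := by
    push_cast
    exact Finset.sum_congr rfl fun x _ => by rw [MulChar.inv_apply', y_coe]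
  have residue_term (x : F) : residue V (y x⁻¹ * (Algebra.trace (ZMod p) F x).val) =
      σ (x⁻¹ * algebraMap (ZMod p) F (Algebra.trace (ZMod p) F x)) := by
    conv_rhs => rw [← ZMod.natCast_zmod_val (Algebra.trace (ZMod p) F x)]
    rw [map_mul, y_residue, map_natCast, map_mul, map_natCast, map_natCast]
  rw [sum_coe, ← ValuationSubring.valuation_eq_one_iff, ← residue_ne_zero_iff_isUnit, map_sum,
    Finset.sum_congr rfl fun x _ => residue_term x, ← map_sum, sum_inv_mul_trace, map_neg, map_one]
  exact neg_ne_zero.2 one_ne_zero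

lemma exists_gaussSum_eq_add {π : V} (hπ : (π : ℂ) = zetaP p - 1) {χ : MulChar F ℂ} (hχ : χ ≠ 1) :
    ∃ b : V, gaussSum χ (traceChar F p) =
      π * ∑ x, χ x * (Algebra.trace (ZMod p) F x).val + π ^ 2 * b := by
  let n (x : F) : ℕ := (Algebra.trace (ZMod p) F x).val
  let χV (x : F) : V :=
    ⟨χ x, V.mem_of_valuation_le_one _ (valuation_le_one_of_isIntegral (isIntegral_mulChar χ x))⟩
  let R (x : F) : V := (powAddExpansion 1 π (n x)).1
  have traceChar_expand (x : F) : traceChar F p x = 1 + n x * π + R x * π ^ 2 := by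
    have expand := congrArg (fun z : V => (z : ℂ)) (powAddExpansion 1 π (n x)).2
    simp only [one_pow, mul_one] at expand
    push_cast at expand
    rw [traceChar_apply, ← expand, hπ, add_sub_cancel]
  refine ⟨∑ x, χV x * R x, ?_⟩
  calc gaussSum χ (traceChar F p)
      = ∑ x, (χ x + (π * (χ x * n x) + π ^ 2 * (χV x * R x))) :=
        Finset.sum_congr rfl fun x _ => by rw [traceChar_expand]; ring
    _ = _ := by
        push_cast
        rw [Finset.sum_add_distrib, MulChar.sum_eq_zero_of_ne_one hχ, zero_add,
          Finset.sum_add_distrib, Finset.mul_sum, Finset.mul_sum]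

lemma IsTeichmullerLift.valuation_gaussSum_inv (hV : V.valuation (p : ℂ) < 1)
    {σ : F →+* ResidueField V} {ω : MulChar F ℂ} (h : IsTeichmullerLift σ ω) (hω : ω ≠ 1) :
    V.valuation (gaussSum ω⁻¹ (traceChar F p)) = V.valuation (zetaP p - 1) := by
  have hp : p.Prime := Fact.out
  have root := isPrimitiveRoot_zetaP p
  have π_lt_one : V.valuation (zetaP p - 1) < 1 :=
    valuation_sub_one_lt_one_of_pow_eq_one hp hV (k := 1) ((pow_one p).symm ▸ root.pow_eq_one)
  have π_pos : 0 < V.valuation (zetaP p - 1) :=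
    zero_lt_iff.2 ((Valuation.ne_zero_iff _).2 (sub_ne_zero.2 (root.ne_one hp.one_lt)))
  obtain ⟨b, hb⟩ := exists_gaussSum_eq_add (π := ⟨_, V.mem_of_valuation_le_one _ π_lt_one.le⟩)
    rfl (inv_ne_one.2 hω)
  rw [hb, Valuation.map_add_eq_of_lt_left, map_mul, h.valuation_sum_inv_mul_trace, mul_one]
  rw [map_mul, map_mul, h.valuation_sum_inv_mul_trace, mul_one, map_pow, sq]
  exact (mul_le_of_le_one_right' (V.valuation_le_one b)).trans_lt
    (mul_lt_of_lt_one_left π_pos π_lt_one)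

omit [Fact p.Prime] in
lemma valuation_prime_le_zetaP_sub_one_pow (hp : p.Prime) :
    V.valuation (p : ℂ) ≤ V.valuation (zetaP p - 1) ^ (p - 1) := by
  have := Fact.mk hp
  obtain ⟨m, rfl⟩ := Nat.exists_eq_succ_of_ne_zero hp.ne_zero
  rw [Nat.succ_sub_one, Nat.cast_succ, ← (isPrimitiveRoot_zetaP _).prod_one_sub_pow_eq_order,
    map_prod]
  refine (Finset.prod_le_pow_card _ _ _ fun i _ => ?_).trans_eq (by rw [Finset.card_range])
  rw [← neg_sub, Valuation.map_neg, ← mul_geom_sum, map_mul]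
  exact mul_le_of_le_one_right' (valuation_le_one_of_isIntegral
    (IsIntegral.sum _ fun j _ => (isIntegral_zetaP (m + 1)).pow j))

lemma IsTeichmullerLift.valuation_prime_le (hV : V.valuation (p : ℂ) < 1)
    {σ : F →+* ResidueField V} {ω : MulChar F ℂ} (h : IsTeichmullerLift σ ω) (hω : ω ≠ 1) :
    V.valuation (p : ℂ) ≤ V.valuation (gaussSum ω⁻¹ (traceChar F p)) ^ (p - 1) :=
  (h.valuation_gaussSum_inv hV hω).symm ▸ valuation_prime_le_zetaP_sub_one_pow Fact.out

end Teichmuller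

section ResidueSums

/-- The sum of the residues modulo `m` of `a, p a, …, p ^ (f - 1) a`. For `m = p ^ f - 1` it is
`(p ^ f - 1) / (p - 1)` times the sum of the base `p` digits of `a`. -/
def frobeniusResidueSum (p f m a : ℕ) : ℕ := ∑ i ∈ Finset.range f, (p ^ i * a) % m

lemma frobeniusResidueSum_zero (p f m : ℕ) : frobeniusResidueSum p f m 0 = 0 :=
  Finset.sum_eq_zero fun i _ => by rw [mul_zero, Nat.zero_mod]

lemma frobeniusResidueSum_le (p f a : ℕ) {m : ℕ} (hm : 0 < m) :
    frobeniusResidueSum p f m a ≤ f * m := by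
  simpa [frobeniusResidueSum] using
    Finset.sum_le_card_nsmul (Finset.range f) _ m fun i _ => (Nat.mod_lt (p ^ i * a) hm).le

lemma frobeniusResidueSum_mod (p f m a : ℕ) :
    frobeniusResidueSum p f m (a % m) = frobeniusResidueSum p f m a :=
  Finset.sum_congr rfl fun i _ => (Nat.mod_modEq a m).mul_left (p ^ i)

lemma frobeniusResidueSum_mul_mul (p f m d a : ℕ) :
    frobeniusResidueSum p f (d * m) (d * a) = d * frobeniusResidueSum p f m a := by
  rw [frobeniusResidueSum, frobeniusResidueSum, Finset.mul_sum]
  exact Finset.sum_congr rfl fun i _ => by rw [mul_left_comm, Nat.mul_mod_mul_left]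

lemma frobeniusResidueSum_prime_mul {p f m : ℕ} (h : p ^ f ≡ 1 [MOD m]) (a : ℕ) :
    frobeniusResidueSum p f m (p * a) = frobeniusResidueSum p f m a := by
  have last_eq_first : (p ^ f * a) % m = (p ^ 0 * a) % m := h.mul_right a
  have shift := (Finset.sum_range_succ' (fun i => (p ^ i * a) % m) f).symm.trans
    (Finset.sum_range_succ _ f)
  rw [last_eq_first, Nat.add_right_cancel_iff] at shift
  simp only [frobeniusResidueSum, ← shift, pow_succ, mul_assoc]

lemma mod_add_mod_eq_of_dvd_add {m x y : ℕ} (h : m ∣ x + y) (hx : ¬m ∣ x) :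
    x % m + y % m = m := by
  have m_pos : 0 < m := by
    refine Nat.pos_of_ne_zero fun hm => hx ?_
    rw [hm, zero_dvd_iff] at h ⊢
    exact Nat.eq_zero_of_add_eq_zero_right h
  have : x % m ≠ 0 := fun hx' => hx (Nat.dvd_of_mod_eq_zero hx')
  refine Nat.eq_of_dvd_of_lt_two_mul (by omega) ?_ ?_
  · rwa [Nat.dvd_iff_mod_eq_zero, ← Nat.add_mod, ← Nat.dvd_iff_mod_eq_zero]
  · have := Nat.mod_lt x m_pos
    have := Nat.mod_lt y m_pos
    omega

lemma frobeniusResidueSum_add_of_dvd_add {p m a b : ℕ} (f : ℕ) (hpm : p.Coprime m)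
    (h : m ∣ a + b) (ha : ¬m ∣ a) :
    frobeniusResidueSum p f m a + frobeniusResidueSum p f m b = f * m := by
  have term_eq (i : ℕ) : (p ^ i * a) % m + (p ^ i * b) % m = m :=
    mod_add_mod_eq_of_dvd_add (mul_add (p ^ i) a b ▸ h.mul_left _) fun h' =>
      ha ((hpm.symm.pow_right i).dvd_of_dvd_mul_left h')
  simp only [frobeniusResidueSum, ← Finset.sum_add_distrib, term_eq, Finset.sum_const,
    Finset.card_range, smul_eq_mul]

lemma mul_mod_mul_sub_one_add {A B a : ℕ} (ha : a < A * B - 1) :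
    A * a % (A * B - 1) + (A * B - 1) * (a / B) = A * a := by
  have B_pos : 0 < B := Nat.pos_of_ne_zero fun hB => by simp [hB] at ha
  set Q := a / B
  set R := a % B
  have a_eq : B * Q + R = a := Nat.div_add_mod a B
  have R_lt : R < B := Nat.mod_lt a B_pos
  have Q_lt : Q < A := (Nat.div_lt_iff_lt_mul B_pos).2 (ha.trans_le (Nat.sub_le _ _))
  obtain ⟨A', rfl⟩ := Nat.exists_eq_add_one.2 (Nat.zero_lt_of_lt Q_lt)
  have product_eq : (A' + 1) * B = (A' + 1) * B - 1 + 1 := by omega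
  have decomposition : (A' + 1) * a = ((A' + 1) * B - 1) * Q + (Q + (A' + 1) * R) := by
    linear_combination (A' + 1) * a_eq.symm + Q * product_eq
  have remainder_lt : Q + (A' + 1) * R < (A' + 1) * B - 1 := by
    rcases eq_or_lt_of_le (Nat.succ_le_of_lt R_lt) with R_eq | R_lt'
    · have Q_ne : Q ≠ A' := by
        intro hQ
        rw [hQ] at a_eq
        have : (A' + 1) * B = B * A' + B := by ring
        omega
      have : (A' + 1) * B = (A' + 1) * R + (A' + 1) := by
        rw [← R_eq, Nat.mul_succ]
      omega
    · have := Nat.mul_le_mul_left (A' + 1) (show R + 2 ≤ B from R_lt')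
      have : (A' + 1) * (R + 2) = (A' + 1) * R + 2 * A' + 2 := by ring
      omega
  rw [decomposition, Nat.mul_add_mod, Nat.mod_eq_of_lt remainder_lt, add_comm]

lemma frobeniusResidueSum_succ {p f a : ℕ} (ha : a + 1 < p ^ f - 1) (hpa : ¬p ∣ a + 1) :
    frobeniusResidueSum p f (p ^ f - 1) (a + 1) =
      frobeniusResidueSum p f (p ^ f - 1) a + ∑ i ∈ Finset.range f, p ^ i := by
  rw [frobeniusResidueSum, frobeniusResidueSum, ← Finset.sum_add_distrib]
  refine Finset.sum_congr rfl fun i hi => ?_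
  have i_lt := Finset.mem_range.1 hi
  have pow_eq : p ^ f = p ^ i * p ^ (f - i) := by rw [← pow_add, Nat.add_sub_cancel' i_lt.le]
  have div_eq : (a + 1) / p ^ (f - i) = a / p ^ (f - i) := by
    rw [Nat.succ_div, if_neg fun h => hpa ((dvd_pow_self p (by omega)).trans h), add_zero]
  rw [pow_eq] at ha ⊢
  have mod_succ := mul_mod_mul_sub_one_add ha
  have mod_self := mul_mod_mul_sub_one_add ((Nat.lt_succ_self a).trans ha)
  rw [div_eq, mul_add] at mod_succ
  rw [mul_add]
  omega

end ResidueSums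

section Stickelberger

variable {V : ValuationSubring ℂ} {p : ℕ} [Fact p.Prime] {F : Type*} [Field F] [Fintype F]
  [Algebra (ZMod p) F] {η : MulChar F ℂ} {f : ℕ}

lemma valuation_gaussSum_one_pow (m n : ℕ) :
    V.valuation (gaussSum (1 : MulChar F ℂ) (traceChar F p)) ^ n =
      V.valuation (p : ℂ) ^ frobeniusResidueSum p f m 0 := by
  classical
  rw [frobeniusResidueSum_zero, gaussSum_one_left (traceChar_ne_one p), Valuation.map_neg, map_one,
    one_pow, pow_zero]

lemma valuation_gaussSum_mul_le {χ φ : MulChar F ℂ} (h : χ * φ ≠ 1) :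
    V.valuation (gaussSum χ (traceChar F p)) * V.valuation (gaussSum φ (traceChar F p)) ≤
      V.valuation (gaussSum (χ * φ) (traceChar F p)) := by
  rw [← map_mul, ← jacobiSum_mul_nontrivial h, map_mul]
  exact mul_le_of_le_one_right' (valuation_le_one_of_isIntegral (isIntegral_jacobiSum χ φ))

lemma valuation_prime_pow_frobeniusResidueSum_le (hη : orderOf η = p ^ f - 1)
    (hb : V.valuation (p : ℂ) ≤ V.valuation (gaussSum η (traceChar F p)) ^ (p - 1)) (a : ℕ)
    (ha : a < p ^ f - 1) :
    V.valuation (p : ℂ) ^ frobeniusResidueSum p f (p ^ f - 1) a ≤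
      V.valuation (gaussSum (η ^ a) (traceChar F p)) ^ (p ^ f - 1) := by
  have hp : p.Prime := Fact.out
  have geometric : (p - 1) * ∑ i ∈ Finset.range f, p ^ i = p ^ f - 1 := by
    rw [mul_comm, Nat.geomSum_eq hp.two_le]
    exact Nat.div_mul_cancel (Nat.sub_one_dvd_pow_sub_one p f)
  have base_pow : V.valuation (p : ℂ) ^ (∑ i ∈ Finset.range f, p ^ i) ≤
      V.valuation (gaussSum η (traceChar F p)) ^ (p ^ f - 1) := by
    rw [← geometric, pow_mul]
    exact pow_le_pow_left₀ zero_le hb _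
  have pow_modEq : p ^ f ≡ 1 [MOD p ^ f - 1] :=
    ((Nat.modEq_iff_dvd' (pow_pos hp.pos f)).2 dvd_rfl).symm
  induction a using Nat.strong_induction_on with
  | _ a ih =>
  rcases Nat.eq_zero_or_pos a with rfl | a_pos
  · rw [pow_zero, valuation_gaussSum_one_pow]
  by_cases hpa : p ∣ a
  · obtain ⟨b, rfl⟩ := hpa
    have b_lt : b < p * b := lt_mul_of_one_lt_left (Nat.pos_of_mul_pos_left a_pos) hp.one_lt
    rw [frobeniusResidueSum_prime_mul pow_modEq, mul_comm p b, pow_mul, gaussSum_pow_prime]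
    exact ih b b_lt (b_lt.trans ha)
  · obtain ⟨c, rfl⟩ := Nat.exists_eq_succ_of_ne_zero a_pos.ne'
    have ne_one : η ^ c * η ≠ 1 := by
      rw [← pow_succ]
      exact pow_ne_one_of_lt_orderOf c.succ_ne_zero (hη ▸ ha)
    rw [frobeniusResidueSum_succ ha hpa, pow_add, pow_succ]
    refine (mul_le_mul' (ih c c.lt_succ_self (c.lt_succ_self.trans ha)) base_pow).trans ?_
    rw [← mul_pow]
    exact pow_le_pow_left₀ zero_le (valuation_gaussSum_mul_le ne_one) _

/-- The lower bounds for `a` and `p ^ f - 1 - a` have product `|p ^ f| ^ (p ^ f - 1)`, which is also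
the product of the bounded quantities, so neither bound is strict. -/
lemma valuation_gaussSum_pow_eq (hcard : Fintype.card F = p ^ f) (hη : orderOf η = p ^ f - 1)
    (hb : V.valuation (p : ℂ) ≤ V.valuation (gaussSum η (traceChar F p)) ^ (p - 1)) {a : ℕ}
    (ha : a < p ^ f - 1) :
    V.valuation (gaussSum (η ^ a) (traceChar F p)) ^ (p ^ f - 1) =
      V.valuation (p : ℂ) ^ frobeniusResidueSum p f (p ^ f - 1) a := by
  have hp : p.Prime := Fact.out
  rcases Nat.eq_zero_or_pos a with rfl | a_pos
  · rw [pow_zero, valuation_gaussSum_one_pow]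
  have f_ne_zero : f ≠ 0 := by
    rintro rfl
    simp at ha
  have coprime : p.Coprime (p ^ f - 1) := by
    refine (hp.coprime_iff_not_dvd).2 fun h => hp.one_lt.ne' (Nat.dvd_one.1 ?_)
    exact (Nat.dvd_sub_iff_right (pow_pos hp.pos f) (dvd_pow_self p f_ne_zero)).1 h
  have inv_eq : (η ^ a)⁻¹ = η ^ (p ^ f - 1 - a) := by
    rw [inv_eq_iff_mul_eq_one, ← pow_add, Nat.add_sub_cancel' ha.le, ← hη, pow_orderOf_eq_one]
  have product_eq : V.valuation (gaussSum (η ^ a) (traceChar F p)) ^ (p ^ f - 1) *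
      V.valuation (gaussSum (η ^ (p ^ f - 1 - a)) (traceChar F p)) ^ (p ^ f - 1) =
      V.valuation (p : ℂ) ^ frobeniusResidueSum p f (p ^ f - 1) a *
        V.valuation (p : ℂ) ^ frobeniusResidueSum p f (p ^ f - 1) (p ^ f - 1 - a) := by
    rw [← mul_pow, ← inv_eq, valuation_gaussSum_mul p
      (pow_ne_one_of_lt_orderOf a_pos.ne' (hη ▸ ha)), hcard, ← pow_add,
      frobeniusResidueSum_add_of_dvd_add f coprime (Nat.add_sub_cancel' ha.le).symm.dvd
        (Nat.not_dvd_of_pos_of_lt a_pos ha), pow_mul, Nat.cast_pow, map_pow]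
  have lower := valuation_prime_pow_frobeniusResidueSum_le hη hb a ha
  have lower_compl := valuation_prime_pow_frobeniusResidueSum_le hη hb (p ^ f - 1 - a) (by omega)
  have pos : 0 < V.valuation (p : ℂ) ^ frobeniusResidueSum p f (p ^ f - 1) (p ^ f - 1 - a) :=
    pow_pos (zero_lt_iff.2 ((Valuation.ne_zero_iff _).2 (Nat.cast_ne_zero.2 hp.ne_zero))) _
  refine lower.antisymm' (le_of_mul_le_mul_right ?_ pos)
  exact (mul_le_mul_right lower_compl _).trans_eq product_eq

lemma exists_coprime_eq_pow_mul_of_orderOf_mul_eq_card {G : Type*} [Group G] [Finite G] {η χ : G}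
    (hη : orderOf η = Nat.card G) {M : ℕ} (hM : orderOf χ * M = Nat.card G) :
    ∃ k : ℕ, k.Coprime (orderOf χ) ∧ χ = η ^ (M * k) := by
  have M_pos : 0 < M := Nat.pos_of_mul_pos_left (hM ▸ Nat.card_pos)
  have zpowers_eq_top : Subgroup.zpowers η = ⊤ := by
    rw [← Subgroup.card_eq_iff_eq_top, Nat.card_zpowers, hη]
  obtain ⟨j, rfl⟩ := mem_powers_iff_mem_zpowers.2
    (zpowers_eq_top ▸ Subgroup.mem_top χ : χ ∈ Subgroup.zpowers η)
  have gcd_eq : (Nat.card G).gcd j = M := by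
    have := Nat.gcd_pos_of_pos_left j (Nat.card_pos (α := G))
    have order_mul : orderOf (η ^ j) * (Nat.card G).gcd j = Nat.card G := by
      rw [orderOf_pow, hη, Nat.div_mul_cancel (Nat.gcd_dvd_left _ _)]
    exact Nat.eq_of_mul_eq_mul_left (orderOf_pos (η ^ j)) (order_mul.trans hM.symm)
  obtain ⟨k, rfl⟩ : M ∣ j := gcd_eq ▸ Nat.gcd_dvd_right _ _
  refine ⟨k, Nat.coprime_comm.1 (Nat.eq_of_mul_eq_mul_left M_pos ?_), rfl⟩
  rw [← Nat.gcd_mul_left, mul_comm M (orderOf _), hM, gcd_eq, mul_one]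

theorem exists_coprime_valuation_gaussSum_pow (hV : V.valuation (p : ℂ) < 1)
    (hcard : Fintype.card F = p ^ f) {χ : MulChar F ℂ} (hχ : χ ≠ 1) :
    ∃ k : ℕ, k.Coprime (orderOf χ) ∧ ∀ m : ℕ,
      V.valuation (gaussSum (χ ^ m) (traceChar F p)) ^ orderOf χ =
        V.valuation (p : ℂ) ^ frobeniusResidueSum p f (orderOf χ) (k * m) := by
  classical
  obtain ⟨σ, ω, hω⟩ := exists_isTeichmullerLift hV hcard
  have order_inv : orderOf ω⁻¹ = p ^ f - 1 := by rw [orderOf_inv, hω.orderOf_eq, hcard]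
  have card_eq : Nat.card (MulChar F ℂ) = p ^ f - 1 := by
    rw [MulChar.card_eq_card_units_of_hasEnoughRootsOfUnity, Nat.card_eq_fintype_card,
      Fintype.card_units, hcard]
  obtain ⟨M, hM⟩ := orderOf_dvd_natCard χ
  obtain ⟨k, k_coprime, hk⟩ := exists_coprime_eq_pow_mul_of_orderOf_mul_eq_card
    (order_inv.trans card_eq.symm) hM.symm
  have M_pos : 0 < M := Nat.pos_of_mul_pos_left (hM ▸ Nat.card_pos)
  have ω_ne_one : ω ≠ 1 := by
    rintro rfl
    exact hχ (by rw [hk, inv_one, one_pow])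
  have base := hω.valuation_prime_le hV ω_ne_one
  rw [card_eq, mul_comm] at hM
  refine ⟨k, k_coprime, fun m => ?_⟩
  have exponent_lt : M * (k * m % orderOf χ) < p ^ f - 1 := by
    rw [hM]
    exact (Nat.mul_lt_mul_left M_pos).2 (Nat.mod_lt _ (orderOf_pos χ))
  have χ_pow : χ ^ m = ω⁻¹ ^ (M * (k * m % orderOf χ)) := by
    rw [← Nat.mul_mod_mul_left, ← hM, ← order_inv, pow_mod_orderOf, ← mul_assoc, pow_mul, ← hk]
  have eq := valuation_gaussSum_pow_eq hcard order_inv base exponent_lt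
  rw [← χ_pow, hM, frobeniusResidueSum_mul_mul, frobeniusResidueSum_mod, mul_comm M, mul_comm M,
    pow_mul, pow_mul] at eq
  exact (pow_left_inj₀ zero_le zero_le M_pos.ne').1 eq

end Stickelberger

section LegendreSums

variable {l : ℕ} [Fact l.Prime]

lemma legendreSym_natCast_eq_zero_iff {n : ℕ} : legendreSym l n = 0 ↔ l ∣ n := by
  rw [legendreSym.eq_zero_iff, Int.cast_natCast, ZMod.natCast_eq_zero_iff]

lemma legendreSym_natCast_eq_one_or_neg_one {n : ℕ} (hn : ¬l ∣ n) :
    legendreSym l n = 1 ∨ legendreSym l n = -1 :=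
  legendreSym.eq_one_or_neg_one l (by rwa [Int.cast_natCast, Ne, ZMod.natCast_eq_zero_iff])

lemma legendreSym_natCast_eq_of_modEq {m n : ℕ} (h : m ≡ n [MOD l]) :
    legendreSym l m = legendreSym l n := by
  rw [legendreSym.mod l m, legendreSym.mod l n, (Int.natCast_modEq_iff.2 h : (m : ℤ) % l = n % l)]

lemma legendreSym_natCast_pow (n k : ℕ) : legendreSym l (n ^ k : ℕ) = legendreSym l n ^ k := by
  rw [Nat.cast_pow]
  exact map_pow (legendreSym.hom l) _ k

lemma sum_range_mul {M : Type*} [AddCommMonoid M] (a b : ℕ) (g : ℕ → M) :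
    ∑ n ∈ Finset.range (a * b), g n =
      ∑ y ∈ Finset.range b, ∑ x ∈ Finset.range a, g (a * y + x) := by
  induction b with
  | zero => simp
  | succ b ih => rw [Finset.sum_range_succ, ← ih, mul_add, mul_one, Finset.sum_range_add]

lemma sum_legendreSym_range (hl : l ≠ 2) : ∑ n ∈ Finset.range l, legendreSym l n = 0 := by
  rw [← sum_zmod_val_eq_sum_range l fun n => legendreSym l n]
  simpa [legendreSym] using quadraticChar_sum_zero (F := ZMod l) (by rwa [ZMod.ringChar_zmod_n])

lemma sum_legendreSym_mul_range :
    ∑ n ∈ Finset.range l, legendreSym l n * n = legendreMoment l := by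
  rw [← sum_zmod_val_eq_sum_range l fun n => legendreSym l n * n]
  simp [legendreMoment, legendreSym, mul_comm]

lemma legendreSym_natCast_mul_add (y x : ℕ) : legendreSym l (l * y + x : ℕ) = legendreSym l x :=
  legendreSym_natCast_eq_of_modEq (Nat.mul_add_mod l y x)

lemma sum_legendreSym_range_mul (hl : l ≠ 2) (m : ℕ) :
    ∑ n ∈ Finset.range (l * m), legendreSym l n = 0 := by
  simp only [sum_range_mul, legendreSym_natCast_mul_add, sum_legendreSym_range hl,
    Finset.sum_const_zero]

lemma sum_legendreSym_mul_range_mul (hl : l ≠ 2) (m : ℕ) :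
    ∑ n ∈ Finset.range (l * m), legendreSym l n * n = m * legendreMoment l := by
  have block_sum (y : ℕ) : ∑ x ∈ Finset.range l, legendreSym l (l * y + x : ℕ) * (l * y + x : ℕ) =
      legendreMoment l := by
    simp only [legendreSym_natCast_mul_add]
    simp only [Nat.cast_add, mul_add, Finset.sum_add_distrib, ← Finset.sum_mul,
      sum_legendreSym_range hl, zero_mul, zero_add, sum_legendreSym_mul_range]
  rw [sum_range_mul, Finset.sum_congr rfl fun y _ => block_sum y, Finset.sum_const,
    Finset.card_range, nsmul_eq_mul]

lemma sum_legendreSym_mul_mod (hl : l ≠ 2) (m d : ℕ) :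
    ∑ n ∈ Finset.range (l * m * d), legendreSym l n * (d * n % (l * m * d) : ℕ) =
      d * (d * (m * legendreMoment l)) := by
  have block_sum (y : ℕ) : ∑ x ∈ Finset.range (l * m),
      legendreSym l (l * m * y + x : ℕ) * (d * (l * m * y + x) % (l * m * d) : ℕ) =
        d * (m * legendreMoment l) := by
    rw [← sum_legendreSym_mul_range_mul hl, Finset.mul_sum]
    refine Finset.sum_congr rfl fun x hx => ?_
    rw [mul_comm (l * m) d, Nat.mul_mod_mul_left, Nat.mul_add_mod,
      Nat.mod_eq_of_lt (Finset.mem_range.1 hx), mul_assoc l, legendreSym_natCast_mul_add,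
      Nat.cast_mul, mul_left_comm]
  rw [sum_range_mul, Finset.sum_congr rfl fun y _ => block_sum y, Finset.sum_const,
    Finset.card_range, nsmul_eq_mul]

lemma sum_legendreSym_sq {r : ℕ} (hr : r ≠ 0) :
    ∑ n ∈ Finset.range (l ^ r), legendreSym l n ^ 2 = Nat.totient (l ^ r) := by
  rw [Nat.totient, Finset.card_filter, Nat.cast_sum]
  refine Finset.sum_congr rfl fun n _ => ?_
  simp only [Nat.coprime_pow_left_iff (Nat.pos_of_ne_zero hr),
    Nat.Prime.coprime_iff_not_dvd (Fact.out : l.Prime)]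
  by_cases h : l ∣ n
  · simp [h, legendreSym_natCast_eq_zero_iff.2 h]
  · rcases legendreSym_natCast_eq_one_or_neg_one h with h' | h' <;> simp [h, h']

lemma two_mul_sum_filter_legendreSym_eq {R : Type*} [CommRing R] (s : Finset ℕ) (g : ℕ → R)
    {k : ℕ} (hk : ¬l ∣ k) :
    2 * ∑ n ∈ s with legendreSym l (n : ℕ) = legendreSym l k, g n =
      ∑ n ∈ s, (legendreSym l n : R) ^ 2 * g n +
        legendreSym l k * ∑ n ∈ s, (legendreSym l n : R) * g n := by
  rw [Finset.sum_filter, Finset.mul_sum, Finset.mul_sum, ← Finset.sum_add_distrib]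
  refine Finset.sum_congr rfl fun n _ => ?_
  by_cases h : l ∣ n
  · rw [legendreSym_natCast_eq_zero_iff.2 h,
      if_neg fun h' => hk (legendreSym_natCast_eq_zero_iff.1 h'.symm)]
    simp
  · rcases legendreSym_natCast_eq_one_or_neg_one h with h | h <;>
      rcases legendreSym_natCast_eq_one_or_neg_one hk with h' | h' <;> simp [h, h', two_mul]

lemma two_mul_card_filter_legendreSym_eq (hl : l ≠ 2) {r k : ℕ} (hr : r ≠ 0) (hk : ¬l ∣ k) :
    2 * (Finset.filter (fun n : ℕ => legendreSym l n = legendreSym l k)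
      (Finset.range (l ^ r))).card = Nat.totient (l ^ r) := by
  have h := two_mul_sum_filter_legendreSym_eq (Finset.range (l ^ r)) (fun _ => (1 : ℤ)) hk
  obtain ⟨s, rfl⟩ := Nat.exists_eq_succ_of_ne_zero hr
  simp only [mul_one, Int.cast_id, sum_legendreSym_sq hr] at h
  rw [Nat.succ_eq_add_one, pow_succ', sum_legendreSym_range_mul hl, mul_zero, add_zero,
    Finset.sum_const, nsmul_one, ← pow_succ'] at h
  exact_mod_cast h

end LegendreSums

section Orbits

variable {l p r f : ℕ} [Fact l.Prime]

lemma legendreSym_eq_one_of_odd_orderOf (hr : r ≠ 0) (hf : orderOf (p : ZMod (l ^ r)) = f)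
    (hodd : Odd f) : legendreSym l p = 1 := by
  have pow_modEq : p ^ f ≡ 1 [MOD l ^ r] := by
    rw [← ZMod.natCast_eq_natCast_iff, Nat.cast_pow, ← hf, pow_orderOf_eq_one, Nat.cast_one]
  have legendre_pow : legendreSym l p ^ f = 1 := by
    rw [← legendreSym_natCast_pow,
      legendreSym_natCast_eq_of_modEq (pow_modEq.of_dvd (dvd_pow_self l hr)), Nat.cast_one,
      legendreSym.at_one]
  exact hodd.pow_inj.1 (legendre_pow.trans (one_pow f).symm)

/-- The order of `p` being half of `φ(l ^ r)` forces `⟨p⟩` to be the group of squares modulo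
`l ^ r`, so that orbits of multiplication by `p` are the fibres of the Legendre symbol. -/
lemma image_pow_mul_mod_eq_filter_legendreSym (hl : l ≠ 2) (hr : r ≠ 0)
    (hf : orderOf (p : ZMod (l ^ r)) = f) (hφ : Nat.totient (l ^ r) = 2 * f) (hodd : Odd f)
    {k : ℕ} (hk : ¬l ∣ k) :
    Set.InjOn (fun i => (p ^ i * k) % l ^ r) (Finset.range f) ∧
      (Finset.range f).image (fun i => (p ^ i * k) % l ^ r) =
        Finset.filter (fun n : ℕ => legendreSym l n = legendreSym l k) (Finset.range (l ^ r)) := by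
  have prime_l : l.Prime := Fact.out
  have injOn : Set.InjOn (fun i => (p ^ i * k) % l ^ r) (Finset.range f) := by
    intro i hi j hj (hij : p ^ i * k ≡ p ^ j * k [MOD l ^ r])
    have pow_modEq := hij.cancel_right_of_coprime
      (Nat.Coprime.pow_left r (prime_l.coprime_iff_not_dvd.2 hk))
    rw [← ZMod.natCast_eq_natCast_iff, Nat.cast_pow, Nat.cast_pow] at pow_modEq
    rw [Finset.coe_range, ← hf] at hi hj
    exact pow_injOn_Iio_orderOf hi hj pow_modEq
  refine ⟨injOn, Finset.eq_of_subset_of_card_le ?_ ?_⟩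
  · refine Finset.image_subset_iff.2 fun i _ => Finset.mem_filter.2
      ⟨Finset.mem_range.2 (Nat.mod_lt _ (pow_pos prime_l.pos r)), ?_⟩
    rw [legendreSym_natCast_eq_of_modEq ((Nat.mod_modEq _ _).of_dvd (dvd_pow_self l hr)),
      Nat.cast_mul, legendreSym.mul, legendreSym_natCast_pow,
      legendreSym_eq_one_of_odd_orderOf hr hf hodd, one_pow, one_mul]
  · rw [Finset.card_image_of_injOn injOn, Finset.card_range]
    have := two_mul_card_filter_legendreSym_eq hl hr hk
    omega

lemma two_mul_sum_pow_mul_mod {R : Type*} [CommRing R] (hl : l ≠ 2) (hr : r ≠ 0)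
    (hf : orderOf (p : ZMod (l ^ r)) = f) (hφ : Nat.totient (l ^ r) = 2 * f) (hodd : Odd f)
    (g : ℕ → R) {k : ℕ} (hk : ¬l ∣ k) :
    2 * ∑ i ∈ Finset.range f, g ((p ^ i * k) % l ^ r) =
      ∑ n ∈ Finset.range (l ^ r), (legendreSym l n : R) ^ 2 * g n +
        legendreSym l k * ∑ n ∈ Finset.range (l ^ r), (legendreSym l n : R) * g n := by
  obtain ⟨injOn, image_eq⟩ := image_pow_mul_mod_eq_filter_legendreSym hl hr hf hφ hodd hk
  rw [← Finset.sum_image (f := g) injOn, image_eq, two_mul_sum_filter_legendreSym_eq _ g hk]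

lemma legendreSym_natCast_pow_sub_one (hl4 : l % 4 = 3) (hr : r ≠ 0) :
    legendreSym l (l ^ r - 1 : ℕ) = -1 := by
  have l_dvd : ((l ^ r : ℕ) : ZMod l) = 0 := (ZMod.natCast_eq_zero_iff _ _).2 (dvd_pow_self l hr)
  rw [legendreSym, Int.cast_natCast, Nat.cast_sub (Nat.one_le_pow _ _ (NeZero.pos l)), l_dvd,
    Nat.cast_one, zero_sub, quadraticChar_neg_one_of_mod_four hl4]

lemma frobeniusResidueSum_add_pow_sub_one_mul (f : ℕ) (hp : ¬l ∣ p) {k t : ℕ} (hk : ¬l ∣ k)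
    (ht : t < r) :
    frobeniusResidueSum p f (l ^ r) (l ^ t * k) +
      frobeniusResidueSum p f (l ^ r) (l ^ t * ((l ^ r - 1) * k)) = f * l ^ r := by
  have prime_l : l.Prime := Fact.out
  refine frobeniusResidueSum_add_of_dvd_add f
    (Nat.Coprime.pow_right r (prime_l.coprime_iff_not_dvd.2 hp).symm) ?_ fun h => hk ?_
  · rw [← mul_add, ← one_add_mul, Nat.add_sub_cancel' (Nat.one_le_pow _ _ prime_l.pos)]
    exact (dvd_mul_right _ k).mul_left _
  · exact Nat.dvd_of_mul_dvd_mul_left (pow_pos prime_l.pos t)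
      (pow_succ l t ▸ (pow_dvd_pow l ht).trans h)

lemma two_mul_frobeniusResidueSum (hl4 : l % 4 = 3) (hf : orderOf (p : ZMod (l ^ r)) = f)
    (hφ : Nat.totient (l ^ r) = 2 * f) (hodd : Odd f) {k t : ℕ} (hk : ¬l ∣ k) (ht : t < r) :
    2 * (frobeniusResidueSum p f (l ^ r) (l ^ t * k) : ℤ) =
      f * l ^ r + legendreSym l k * (l ^ t * (l ^ (r - 1) * legendreMoment l)) := by
  have hl : l ≠ 2 := by omega
  have hr : r ≠ 0 := by omega
  have not_dvd_p : ¬l ∣ p := by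
    rw [← legendreSym_natCast_eq_zero_iff, legendreSym_eq_one_of_odd_orderOf hr hf hodd]
    exact one_ne_zero
  have orbit_sum {j : ℕ} (hj : ¬l ∣ j) := two_mul_sum_pow_mul_mod (R := ℤ) hl hr hf hφ hodd
    (fun n => (l ^ t * n % l ^ r : ℕ)) hj
  have residueSum_eq (j : ℕ) : (frobeniusResidueSum p f (l ^ r) (l ^ t * j) : ℤ) =
      ∑ i ∈ Finset.range f, ((l ^ t * (p ^ i * j % l ^ r) % l ^ r : ℕ) : ℤ) := by
    simp only [frobeniusResidueSum, Nat.cast_sum, Nat.mul_mod_mod, mul_left_comm]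
  have first_moment := sum_legendreSym_mul_mod hl (l ^ (r - 1 - t)) (l ^ t)
  rw [mul_assoc, ← pow_add, ← pow_succ', show r - 1 - t + t + 1 = r by omega] at first_moment
  have complement := frobeniusResidueSum_add_pow_sub_one_mul f not_dvd_p hk ht
  have legendre_compl : legendreSym l ((l ^ r - 1) * k : ℕ) = -legendreSym l k := by
    rw [Nat.cast_mul, legendreSym.mul, legendreSym_natCast_pow_sub_one hl4 hr, neg_one_mul]
  have not_dvd_compl : ¬l ∣ (l ^ r - 1) * k := by
    rwa [← legendreSym_natCast_eq_zero_iff, legendre_compl, neg_eq_zero,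
      legendreSym_natCast_eq_zero_iff]
  have sum_k := orbit_sum hk
  have sum_compl := orbit_sum not_dvd_compl
  rw [← residueSum_eq] at sum_k sum_compl
  rw [legendre_compl] at sum_compl
  push_cast at sum_k sum_compl first_moment
  zify at complement
  have pow_eq : (l : ℤ) ^ (r - 1) = l ^ t * l ^ (r - 1 - t) := by rw [← pow_add]; congr 1; omega
  refine mul_left_cancel₀ (two_ne_zero (α := ℤ)) ?_
  rw [pow_eq]
  linear_combination sum_k - sum_compl + 2 * complement + 2 * legendreSym l k * first_moment

end Orbits

section GaussianPeriods

variable {l : ℕ} [Fact l.Prime]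

lemma sum_mul_pow_mem_of_periodic {L S : Type*} [Field L] [SetLike S L] [SubsemiringClass S L]
    (K : S) {a b : ℕ} {ξ : L} (hξ : ξ ^ (a * b) = 1) {g : ℕ → L} (hg : ∀ y x, g (a * y + x) = g x)
    (h : ξ ^ a = 1 → ∑ x ∈ Finset.range a, g x * ξ ^ x ∈ K) :
    ∑ n ∈ Finset.range (a * b), g n * ξ ^ n ∈ K := by
  have factorization : ∑ n ∈ Finset.range (a * b), g n * ξ ^ n =
      (∑ y ∈ Finset.range b, (ξ ^ a) ^ y) * ∑ x ∈ Finset.range a, g x * ξ ^ x := by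
    rw [sum_range_mul, Finset.sum_mul_sum]
    simp only [hg, pow_add, pow_mul, mul_left_comm]
  rw [factorization]
  by_cases hξ_a : ξ ^ a = 1
  · exact mul_mem (sum_mem fun y _ => by rw [hξ_a, one_pow]; exact one_mem K) (h hξ_a)
  · rw [geom_sum_eq hξ_a, ← pow_mul, hξ, sub_self, zero_div, zero_mul]
    exact zero_mem K

lemma sum_legendreSym_mul_pow_mem_adjoin (hl4 : l % 4 = 3) {ξ : ℂ} (hξ : ξ ^ l = 1) :
    ∑ x ∈ Finset.range l, (legendreSym l x : ℂ) * ξ ^ x ∈ ℚ⟮sqrtNeg l⟯ := by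
  by_cases hξ1 : ξ = 1
  · have sum_eq := sum_legendreSym_range (l := l) (by omega)
    simp only [hξ1, one_pow, mul_one, ← Int.cast_sum, sum_eq, Int.cast_zero, zero_mem]
  have primitive : IsPrimitiveRoot ξ l :=
    IsPrimitiveRoot.iff_orderOf.2 (orderOf_eq_prime hξ hξ1)
  have eq_gaussSum : ∑ x ∈ Finset.range l, (legendreSym l x : ℂ) * ξ ^ x =
      gaussSum (legendreChar l) (AddChar.zmodChar l hξ) := by
    rw [← sum_zmod_val_eq_sum_range l fun x => (legendreSym l x : ℂ) * ξ ^ x]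
    simp [gaussSum, legendreSym, legendreChar_apply, AddChar.zmodChar_apply]
  have gaussSum_sq_eq := gaussSum_legendreChar_sq hl4
    (AddChar.zmodChar_primitive_of_primitive_root l primitive)
  rw [← sqrtNeg_sq, sq_eq_sq_iff_eq_or_eq_neg] at gaussSum_sq_eq
  have sqrtNeg_mem : sqrtNeg l ∈ ℚ⟮sqrtNeg l⟯ := mem_adjoin_simple_self ℚ _
  rw [eq_gaussSum]
  rcases gaussSum_sq_eq with h | h <;> rw [h]
  · exact sqrtNeg_mem
  · exact neg_mem sqrtNeg_mem

lemma sum_legendreSym_sq_mul_pow_mem {L S : Type*} [Field L] [SetLike S L] [SubringClass S L]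
    (K : S) {ξ : L} (hξ : ξ ^ l = 1) :
    ∑ x ∈ Finset.range l, (legendreSym l x : L) ^ 2 * ξ ^ x ∈ K := by
  have zero_mem_range := Finset.mem_range.2 (NeZero.pos l)
  have add_one_eq : ∑ x ∈ Finset.range l, (legendreSym l x : L) ^ 2 * ξ ^ x + 1 =
      ∑ x ∈ Finset.range l, ξ ^ x := by
    rw [← Finset.add_sum_erase _ (fun x => ξ ^ x) zero_mem_range, pow_zero, add_comm,
      ← Finset.add_sum_erase _ _ zero_mem_range, Nat.cast_zero, legendreSym.at_zero,
      Int.cast_zero, zero_pow two_ne_zero, zero_mul, zero_add]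
    refine congrArg _ (Finset.sum_congr rfl fun x hx => ?_)
    obtain ⟨x_ne, x_lt⟩ := Finset.mem_erase.1 hx
    rcases legendreSym_natCast_eq_one_or_neg_one (l := l) (Nat.not_dvd_of_pos_of_lt
      (Nat.pos_of_ne_zero x_ne) (Finset.mem_range.1 x_lt)) with h | h <;> simp [h]
  rw [← eq_sub_iff_add_eq] at add_one_eq
  rw [add_one_eq]
  refine sub_mem ?_ (one_mem K)
  rcases eq_or_ne ξ 1 with rfl | hξ1
  · exact sum_mem fun x _ => by rw [one_pow]; exact one_mem K
  · rw [geom_sum_eq hξ1, hξ, sub_self, zero_div]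
    exact zero_mem K

lemma mem_of_mul_mem_of_ne_zero {L S : Type*} [Field L] [SetLike S L] [SubfieldClass S L] {K : S}
    {a b : L} (ha : a ∈ K) (ha₀ : a ≠ 0) (h : a * b ∈ K) : b ∈ K :=
  inv_mul_cancel_left₀ ha₀ b ▸ mul_mem (inv_mem ha) h

lemma sum_pow_prime_pow_mem_adjoin {p r f : ℕ} (hl4 : l % 4 = 3) (hr : r ≠ 0)
    (hf : orderOf (p : ZMod (l ^ r)) = f) (hφ : Nat.totient (l ^ r) = 2 * f) (hodd : Odd f)
    {ξ : ℂ} (hξ : ξ ^ l ^ r = 1) : ∑ i ∈ Finset.range f, ξ ^ p ^ i ∈ ℚ⟮sqrtNeg l⟯ := by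
  have prime_l : l.Prime := Fact.out
  have orbit_sum := two_mul_sum_pow_mul_mod (by omega) hr hf hφ hodd (fun n => ξ ^ n)
    prime_l.not_dvd_one
  obtain ⟨s, rfl⟩ := Nat.exists_eq_succ_of_ne_zero hr
  have hξ' : ξ ^ (l * l ^ s) = 1 := by rw [← pow_succ', hξ]
  simp only [mul_one, ← pow_eq_pow_mod _ hξ] at orbit_sum
  rw [Nat.succ_eq_add_one, pow_succ'] at orbit_sum
  refine mem_of_mul_mem_of_ne_zero (ofNat_mem ℚ⟮sqrtNeg l⟯ 2) two_ne_zero ?_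
  rw [orbit_sum]
  refine add_mem (sum_mul_pow_mem_of_periodic _ hξ' (fun y x => ?_)
    (sum_legendreSym_sq_mul_pow_mem _)) (mul_mem (intCast_mem _ _)
      (sum_mul_pow_mem_of_periodic _ hξ' (fun y x => ?_) (sum_legendreSym_mul_pow_mem_adjoin hl4)))
  all_goals rw [legendreSym_natCast_mul_add]

end GaussianPeriods

section GaussSumField

variable (p : ℕ) [Fact p.Prime] {F : Type*} [Field F] [Fintype F] [Algebra (ZMod p) F]

lemma gaussSum_prime_pow (χ : MulChar F ℂ) (i : ℕ) :
    gaussSum (χ ^ p ^ i) (traceChar F p) = gaussSum χ (traceChar F p) := by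
  induction i with
  | zero => rw [pow_zero, pow_one]
  | succ i ih => rw [pow_succ, pow_mul, gaussSum_pow_prime, ih]

lemma sub_one_mul_gaussSum_eq_sum {χ : MulChar F ℂ}
    (hχ : ∀ c : ZMod p, c ≠ 0 → χ (algebraMap (ZMod p) F c) = 1) :
    ((p : ℂ) - 1) * gaussSum χ (traceChar F p) =
      ∑ x, χ x * if Algebra.trace (ZMod p) F x = 0 then (p : ℂ) - 1 else -1 := by
  classical
  have gaussSum_mulShift (c : ZMod p) (hc : c ∈ Finset.univ.erase 0) :
      ∑ x : F, χ x * ZMod.stdAddChar (c * Algebra.trace (ZMod p) F x) =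
        gaussSum χ (traceChar F p) := by
    have c_ne : algebraMap (ZMod p) F c ≠ 0 := (_root_.map_ne_zero _).2 (Finset.ne_of_mem_erase hc)
    rw [gaussSum, ← Equiv.sum_comp (Equiv.mulLeft₀ _ c_ne) fun x => χ x * traceChar F p x]
    refine Finset.sum_congr rfl fun x _ => ?_
    change _ = χ (algebraMap (ZMod p) F c * x) * traceChar F p (algebraMap (ZMod p) F c * x)
    rw [map_mul χ, hχ c (Finset.ne_of_mem_erase hc), one_mul, traceChar_apply,
      ← Algebra.smul_def, map_smul, smul_eq_mul, stdAddChar_eq_zetaP_pow]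
  have sum_stdAddChar (a : ZMod p) : ∑ c ∈ Finset.univ.erase (0 : ZMod p), ZMod.stdAddChar (c * a) =
      if a = 0 then (p : ℂ) - 1 else -1 := by
    have total := AddChar.sum_mulShift a (ZMod.isPrimitive_stdAddChar p)
    rw [← Finset.sum_erase_add _ _ (Finset.mem_univ (0 : ZMod p)), zero_mul,
      AddChar.map_zero_eq_one, ZMod.card] at total
    split_ifs at total ⊢ <;> linear_combination total
  have double_sum := Finset.sum_congr rfl gaussSum_mulShift
  rw [Finset.sum_const, Finset.card_erase_of_mem (Finset.mem_univ _), Finset.card_univ, ZMod.card,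
    nsmul_eq_mul, Nat.cast_sub (Fact.out : p.Prime).one_le, Nat.cast_one, Finset.sum_comm]
    at double_sum
  simp only [← double_sum, ← Finset.mul_sum, sum_stdAddChar]

omit [Fintype F] in
lemma mulChar_algebraMap_eq_one {χ : MulChar F ℂ} {n : ℕ} (hχ : χ ^ n = 1)
    (hn : n.Coprime (p - 1)) {c : ZMod p} (hc : c ≠ 0) : χ (algebraMap (ZMod p) F c) = 1 := by
  have c_ne : algebraMap (ZMod p) F c ≠ 0 := (_root_.map_ne_zero _).2 hc
  have pow_n : χ (algebraMap (ZMod p) F c) ^ n = 1 := by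
    rw [← Units.val_mk0 c_ne, ← MulChar.pow_apply_coe, hχ, MulChar.one_apply_coe]
  have pow_sub_one : χ (algebraMap (ZMod p) F c) ^ (p - 1) = 1 := by
    rw [← map_pow, ← map_pow, ZMod.pow_card_sub_one_eq_one hc, map_one, map_one]
  exact orderOf_eq_one_iff.1 (Nat.eq_one_of_dvd_coprimes hn (orderOf_dvd_of_pow_eq_one pow_n)
    (orderOf_dvd_of_pow_eq_one pow_sub_one))

/-- Replacing `x` by `c x` with `c` in the prime field averages the additive character to a
rational weight, and the Frobenius averages `χ x` to a Gaussian period. -/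
lemma gaussSum_mem_adjoin_sqrtNeg {l r f : ℕ} [Fact l.Prime] (hl4 : l % 4 = 3) (hr : r ≠ 0)
    (hpl : ¬l ∣ p - 1) (hf : orderOf (p : ZMod (l ^ r)) = f)
    (hφ : Nat.totient (l ^ r) = 2 * f) (hodd : Odd f) {χ : MulChar F ℂ} (hχ : χ ^ l ^ r = 1) :
    gaussSum χ (traceChar F p) ∈ ℚ⟮sqrtNeg l⟯ := by
  have trivial_on_base (i : ℕ) (c : ZMod p) (hc : c ≠ 0) :
      (χ ^ p ^ i) (algebraMap (ZMod p) F c) = 1 :=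
    mulChar_algebraMap_eq_one p (by rw [← pow_mul, mul_comm, pow_mul, hχ, one_pow])
      (Nat.Coprime.pow_left r (((Fact.out : l.Prime).coprime_iff_not_dvd).2 hpl)) hc
  have average : (f : ℂ) * (((p : ℂ) - 1) * gaussSum χ (traceChar F p)) =
      ∑ x : F, (∑ i ∈ Finset.range f, χ x ^ p ^ i) *
        if Algebra.trace (ZMod p) F x = 0 then (p : ℂ) - 1 else -1 := by
    have term_eq (i : ℕ) : ((p : ℂ) - 1) * gaussSum χ (traceChar F p) =
        ∑ x : F, χ x ^ p ^ i * if Algebra.trace (ZMod p) F x = 0 then (p : ℂ) - 1 else -1 := by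
      rw [← gaussSum_prime_pow p χ i, sub_one_mul_gaussSum_eq_sum p (trivial_on_base i)]
      simp only [MulChar.pow_apply' χ (pow_ne_zero i (NeZero.ne p))]
    simp only [Finset.sum_mul]
    rw [Finset.sum_comm, ← Finset.sum_congr rfl fun i _ => term_eq i, Finset.sum_const,
      Finset.card_range, nsmul_eq_mul]
  have f_ne : (f : ℂ) ≠ 0 := Nat.cast_ne_zero.2 hodd.pos.ne'
  have p_sub_one_ne : (p : ℂ) - 1 ≠ 0 :=
    sub_ne_zero.2 (Nat.cast_ne_one.2 (Fact.out : p.Prime).one_lt.ne')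
  have p_sub_one_mem : (p : ℂ) - 1 ∈ ℚ⟮sqrtNeg l⟯ := sub_mem (_root_.natCast_mem _ p) (one_mem _)
  refine mem_of_mul_mem_of_ne_zero p_sub_one_mem p_sub_one_ne
    (mem_of_mul_mem_of_ne_zero (_root_.natCast_mem _ f) f_ne ?_)
  rw [average]
  refine sum_mem fun x _ => mul_mem ?_ ?_
  · rcases eq_or_ne x 0 with rfl | hx
    · refine sum_mem fun i _ => pow_mem ?_ _
      rw [MulChar.map_zero]
      exact zero_mem _
    · refine sum_pow_prime_pow_mem_adjoin hl4 hr hf hφ hodd ?_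
      rw [← Units.val_mk0 hx, ← MulChar.pow_apply_coe, hχ, MulChar.one_apply_coe]
  · split_ifs
    exacts [p_sub_one_mem, neg_mem (one_mem _)]

end GaussSumField

section QuadraticIntegers

variable {l p : ℕ} {V : ValuationSubring ℂ}

lemma isIntegral_conj {x : ℂ} (hx : IsIntegral ℤ x) : IsIntegral ℤ (starRingEnd ℂ x) :=
  hx.map (starRingEnd ℂ).toIntAlgHom

lemma exists_rat_trace_norm_of_mem_adjoin_sqrtNeg {m : ℕ} {x : ℂ} (hx : x ∈ ℚ⟮sqrtNeg m⟯) :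
    ∃ t n : ℚ, x + starRingEnd ℂ x = t ∧ x * starRingEnd ℂ x = n := by
  obtain ⟨u, v, rfl⟩ := exists_rat_of_mem_adjoin_sqrtNeg hx
  refine ⟨2 * u, u ^ 2 + m * v ^ 2, ?_, ?_⟩ <;>
    simp only [map_add, map_mul, map_ratCast, conj_sqrtNeg] <;> push_cast
  · ring
  · linear_combination (-(v : ℂ) ^ 2) * sqrtNeg_sq m

lemma exists_int_of_isIntegral_prime_pow_mul (hp : p.Prime) (hV : V.valuation (p : ℂ) < 1) {q : ℚ}
    {M : ℕ} (hq : IsIntegral ℤ ((p : ℂ) ^ M * q)) (hVq : V.valuation (q : ℂ) ≤ 1) :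
    ∃ n : ℤ, q = n := by
  obtain ⟨m, hm⟩ := exists_int_of_isIntegral_ratCast (q := (p : ℚ) ^ M * q) (by exact_mod_cast hq)
  have hm' : (m : ℂ) = (p : ℂ) ^ M * q := by exact_mod_cast (congrArg (Rat.cast : ℚ → ℂ) hm).symm
  obtain ⟨n, rfl⟩ := pow_dvd_of_valuation_le hp hV (n := m) (e := M) (by
    rw [hm', map_mul, map_pow]
    exact mul_le_of_le_one_right' hVq)
  refine ⟨n, mul_left_cancel₀ (pow_ne_zero M (Nat.cast_ne_zero.2 hp.ne_zero : (p : ℚ) ≠ 0)) ?_⟩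
  rw [hm]
  push_cast
  rfl

/-- The places of `ℚ(√-m)` above `p` are `V` and its complex conjugate. -/
lemma isIntegral_of_isIntegral_prime_pow_mul (hp : p.Prime) (hV : V.valuation (p : ℂ) < 1) {m M : ℕ}
    {x : ℂ} (hx : x ∈ ℚ⟮sqrtNeg m⟯) (hint : IsIntegral ℤ ((p : ℂ) ^ M * x))
    (hVx : V.valuation x ≤ 1) (hVx' : V.valuation (starRingEnd ℂ x) ≤ 1) : IsIntegral ℤ x := by
  have hint' := isIntegral_conj hint
  rw [map_mul, map_pow, map_natCast] at hint'
  obtain ⟨t, n, trace_eq, norm_eq⟩ := exists_rat_trace_norm_of_mem_adjoin_sqrtNeg hx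
  obtain ⟨a, rfl⟩ := exists_int_of_isIntegral_prime_pow_mul hp hV (q := t) (M := M)
    (by rw [← trace_eq, mul_add]; exact hint.add hint')
    (by rw [← trace_eq]; exact (V.valuation.map_add _ _).trans (max_le hVx hVx'))
  obtain ⟨b, rfl⟩ := exists_int_of_isIntegral_prime_pow_mul hp hV (q := n) (M := M + M)
    (by rw [← norm_eq, pow_add, mul_mul_mul_comm]; exact hint.mul hint')
    (by rw [← norm_eq, map_mul]; exact mul_le_one' hVx hVx')
  rw [Rat.cast_intCast] at trace_eq norm_eq
  have root : x ^ 2 - a * x + b = 0 := by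
    rw [← trace_eq, ← norm_eq]
    ring
  refine ⟨X ^ 2 - C a * X + C b, by monicity!, ?_⟩
  simpa only [eval₂_add, eval₂_sub, eval₂_mul, eval₂_pow, eval₂_X, eval₂_C, algebraMap_int_eq,
    Int.coe_castRingHom] using root

lemma isIntegral_div_prime_pow (hp : p.Prime) (hV : V.valuation (p : ℂ) < 1) {m e : ℕ} {x : ℂ}
    (hx : x ∈ ℚ⟮sqrtNeg m⟯) (hint : IsIntegral ℤ x)
    (hVx : V.valuation x ≤ V.valuation (p : ℂ) ^ e)
    (hVx' : V.valuation (starRingEnd ℂ x) ≤ V.valuation (p : ℂ) ^ e) :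
    IsIntegral ℤ (x / p ^ e) := by
  have p_pow_ne : (p : ℂ) ^ e ≠ 0 := pow_ne_zero e (Nat.cast_ne_zero.2 hp.ne_zero)
  refine isIntegral_of_isIntegral_prime_pow_mul (M := e) hp hV
    (div_mem hx (pow_mem (_root_.natCast_mem _ p) e)) ?_ ?_ ?_
  · rwa [mul_div_cancel₀ _ p_pow_ne]
  · rw [map_div₀, map_pow]
    exact div_le_one_of_le₀ hVx zero_le
  · rw [map_div₀, map_pow, map_natCast, map_div₀, map_pow]
    exact div_le_one_of_le₀ hVx' zero_le

lemma half_add_mul_sqrtNeg_mul_conj (a b : ℤ) :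
    ((a + b * sqrtNeg l) / 2) * starRingEnd ℂ ((a + b * sqrtNeg l) / 2) =
      (a ^ 2 + l * b ^ 2) / 4 := by
  simp only [map_add, map_mul, map_div₀, map_intCast, map_ofNat, conj_sqrtNeg]
  linear_combination (-(b : ℂ) ^ 2 / 4) * sqrtNeg_sq l

lemma exists_eq_half_add_mul_sqrtNeg (hl : l.Prime) {x : ℂ} (hx : x ∈ ℚ⟮sqrtNeg l⟯)
    (hint : IsIntegral ℤ x) : ∃ a b : ℤ, x = (a + b * sqrtNeg l) / 2 := by
  obtain ⟨u, v, rfl⟩ := exists_rat_of_mem_adjoin_sqrtNeg hx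
  obtain ⟨a, b, -, ha, hb, -⟩ := exists_trace_norm_of_isIntegral hl hint
  have ha' : (2 : ℂ) * u = a := by exact_mod_cast congrArg (Rat.cast : ℚ → ℂ) ha
  have hb' : (2 : ℂ) * v = b := by exact_mod_cast congrArg (Rat.cast : ℚ → ℂ) hb
  exact ⟨a, b, by linear_combination (1 / 2 : ℂ) * ha' + (sqrtNeg l / 2) * hb'⟩

lemma eq_one_or_neg_one_of_mul_conj_eq_one (hl : l.Prime) (hl4 : 4 < l) {x : ℂ}
    (hx : x ∈ ℚ⟮sqrtNeg l⟯) (hint : IsIntegral ℤ x) (norm_eq : x * starRingEnd ℂ x = 1) :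
    x = 1 ∨ x = -1 := by
  obtain ⟨a, b, rfl⟩ := exists_eq_half_add_mul_sqrtNeg hl hx hint
  rw [half_add_mul_sqrtNeg_mul_conj, div_eq_one_iff_eq (by norm_num)] at norm_eq
  have form_eq : a ^ 2 + l * b ^ 2 = 4 := by exact_mod_cast norm_eq
  have b_eq : b = 0 := by
    by_contra hb
    have : 0 < b ^ 2 := by positivity
    zify at hl4
    nlinarith [sq_nonneg a]
  subst b_eq
  rcases sq_eq_sq_iff_eq_or_eq_neg.1 (show a ^ 2 = 2 ^ 2 by linarith) with rfl | rfl <;>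
    [left; right] <;> push_cast <;> ring

/-- The quotient is a unit of an imaginary quadratic field whose only units are `±1`. -/
lemma eq_or_eq_neg_of_valuation_eq (hp : p.Prime) (hV : V.valuation (p : ℂ) < 1) (hl : l.Prime)
    (hl4 : 4 < l) {x y : ℂ} {m : ℕ} (hx : x ∈ ℚ⟮sqrtNeg l⟯) (hy : y ∈ ℚ⟮sqrtNeg l⟯)
    (hx_int : IsIntegral ℤ x) (hy_int : IsIntegral ℤ y)
    (hx_norm : x * starRingEnd ℂ x = p ^ m) (hy_norm : y * starRingEnd ℂ y = p ^ m)
    (hVxy : V.valuation x = V.valuation y) : x = y ∨ x = -y := by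
  have p_pow_ne : (p : ℂ) ^ m ≠ 0 := pow_ne_zero m (Nat.cast_ne_zero.2 hp.ne_zero)
  have y_ne : y ≠ 0 := left_ne_zero_of_mul (hy_norm ▸ p_pow_ne)
  have norm_eq : x / y * starRingEnd ℂ (x / y) = 1 := by
    rw [map_div₀, div_mul_div_comm, hx_norm, hy_norm, div_self p_pow_ne]
  have val_eq : V.valuation (x / y) = 1 := by
    rw [map_div₀, hVxy, div_self ((Valuation.ne_zero_iff _).2 y_ne)]
  have val_conj_eq : V.valuation (starRingEnd ℂ (x / y)) = 1 := by
    simpa [val_eq] using congrArg V.valuation norm_eq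
  have integral : IsIntegral ℤ ((p : ℂ) ^ m * (x / y)) := by
    rw [← hy_norm, show y * starRingEnd ℂ y * (x / y) = x * starRingEnd ℂ y by field_simp]
    exact hx_int.mul (isIntegral_conj hy_int)
  have quotient_mem := div_mem hx hy
  rcases eq_one_or_neg_one_of_mul_conj_eq_one hl hl4 quotient_mem
    (isIntegral_of_isIntegral_prime_pow_mul hp hV quotient_mem integral val_eq.le val_conj_eq.le)
    norm_eq with h | h
  · exact Or.inl ((div_eq_one_iff_eq y_ne).1 h)
  · exact Or.inr (by rw [(div_eq_iff y_ne).1 h, neg_one_mul])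

end QuadraticIntegers

section PrincipalUnits

variable {K : Type*} [Field K] {V : ValuationSubring K}

lemma valuation_mul_sub_one_lt_one {x y : K} (hx : V.valuation (x - 1) < 1)
    (hy : V.valuation (y - 1) < 1) : V.valuation (x * y - 1) < 1 := by
  rw [show x * y - 1 = (x - 1) * (y - 1) + (x - 1) + (y - 1) by ring]
  refine V.valuation.map_add_lt (V.valuation.map_add_lt ?_ hx) hy
  rw [map_mul]
  exact mul_lt_one' hx hy

lemma valuation_pow_sub_one_lt_one {x : K} (hx : V.valuation (x - 1) < 1) (n : ℕ) :
    V.valuation (x ^ n - 1) < 1 := by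
  induction n with
  | zero => simp
  | succ n ih => exact pow_succ x n ▸ valuation_mul_sub_one_lt_one ih hx

variable {l : ℕ}

lemma valuation_intCast_lt_one_iff (hl : l.Prime) (hV : V.valuation (l : K) < 1) {n : ℤ} :
    V.valuation (n : K) < 1 ↔ (l : ℤ) ∣ n := by
  refine ⟨fun h => by_contra fun hn => h.ne (valuation_intCast_eq_one hl hV hn), ?_⟩
  rintro ⟨m, rfl⟩
  have m_le : V.valuation (m : K) ≤ 1 :=
    valuation_le_one_of_isIntegral (by simpa using isIntegral_algebraMap (A := K) (x := m))
  rw [Int.cast_mul, Int.cast_natCast, map_mul]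
  exact (mul_le_of_le_one_right' m_le).trans_lt hV

lemma valuation_natCast_pow_sub_one_lt_one (hl : l.Prime) (hV : V.valuation (l : K) < 1) {p n : ℕ}
    (h : (p : ZMod l) ^ n = 1) : V.valuation ((p : K) ^ n - 1) < 1 := by
  have dvd : (l : ℤ) ∣ p ^ n - 1 := by
    rw [← ZMod.intCast_zmod_eq_zero_iff_dvd]
    simp [h]
  simpa using (valuation_intCast_lt_one_iff hl hV).2 dvd

lemma eq_of_valuation_sub_one_lt_one (hl : l.Prime) (hl2 : l ≠ 2) (hV : V.valuation (l : K) < 1)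
    {x y : K} (hx : V.valuation (x - 1) < 1) (hy : V.valuation (y - 1) < 1) (h : x = y ∨ x = -y) :
    x = y := by
  refine h.resolve_right fun x_eq => ?_
  have two_lt : V.valuation (((-2 : ℤ) : K)) < 1 := by
    rw [show ((-2 : ℤ) : K) = (x - 1) + (y - 1) by rw [x_eq]; push_cast; ring]
    exact V.valuation.map_add_lt hx hy
  have l_dvd : l ∣ 2 :=
    Int.natCast_dvd_natCast.1 (Int.dvd_neg.1 ((valuation_intCast_lt_one_iff hl hV).1 two_lt))
  exact hl2 ((Nat.prime_dvd_prime_iff_eq hl Nat.prime_two).1 l_dvd)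

/-- A character of `l`-power order is congruent to the trivial one modulo a place above `l`. -/
lemma valuation_neg_gaussSum_sub_one_lt_one {V : ValuationSubring ℂ} (hl : l.Prime)
    (hV : V.valuation (l : ℂ) < 1) {F : Type*} [Field F] [Fintype F] {χ : MulChar F ℂ} {r : ℕ}
    (hχ : χ ^ l ^ r = 1) {ψ : AddChar F ℂ} (hψ : ψ ≠ 1) :
    V.valuation (-gaussSum χ ψ - 1) < 1 := by
  classical
  have sum_eq : -gaussSum χ ψ - 1 = ∑ x ∈ Finset.univ.erase 0, -((χ x - 1) * ψ x) := by
    have sum_ψ := AddChar.sum_eq_zero_of_ne_one hψ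
    rw [← Finset.sum_erase_add _ _ (Finset.mem_univ 0), AddChar.map_zero_eq_one] at sum_ψ
    rw [gaussSum, ← Finset.sum_erase_add _ _ (Finset.mem_univ 0), MulChar.map_zero]
    simp only [sub_mul, one_mul, Finset.sum_neg_distrib, Finset.sum_sub_distrib]
    linear_combination -sum_ψ
  rw [sum_eq]
  refine Valuation.map_sum_lt _ one_ne_zero fun x hx => ?_
  have χ_pow : χ x ^ l ^ r = 1 := by
    rw [← MulChar.pow_apply' χ (pow_ne_zero r hl.ne_zero), hχ,
      MulChar.one_apply (Ne.isUnit (Finset.ne_of_mem_erase hx))]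
  have ψ_val : V.valuation (ψ x) = 1 :=
    valuation_eq_one_of_pow_eq_one (Fintype.card_ne_zero (α := F)) (by
      rw [← AddChar.map_nsmul_eq_pow, card_nsmul_eq_zero, AddChar.map_zero_eq_one])
  rw [Valuation.map_neg, map_mul, ψ_val, mul_one]
  exact valuation_sub_one_lt_one_of_pow_eq_one hl hV χ_pow

end PrincipalUnits

section IndexTwo

variable {l r f p : ℕ} [Fact l.Prime]

lemma eq_pow_mul_half_of_totient_eq (hl : l ≠ 2) (hr : r ≠ 0)
    (hφ : Nat.totient (l ^ r) = 2 * f) : f = l ^ (r - 1) * (l / 2) := by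
  have l_odd := (Fact.out : l.Prime).eq_two_or_odd.resolve_left hl
  rw [Nat.totient_prime_pow Fact.out (Nat.pos_of_ne_zero hr),
    show l - 1 = 2 * (l / 2) by omega, mul_left_comm] at hφ
  omega

lemma odd_of_totient_eq (hl4 : l % 4 = 3) (hr : r ≠ 0) (hφ : Nat.totient (l ^ r) = 2 * f) :
    Odd f := by
  rw [eq_pow_mul_half_of_totient_eq (by omega) hr hφ]
  exact (Odd.pow (Nat.odd_iff.2 (by omega))).mul (Nat.odd_iff.2 (by omega))

lemma not_dvd_sub_one_of_pow_lt_orderOf (hp : p ≠ 0) (hr : r ≠ 0)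
    (h : l ^ (r - 1) < orderOf (p : ZMod (l ^ r))) : ¬l ∣ p - 1 := by
  intro hd
  have base_dvd : (l : ℤ) ∣ (p : ℤ) - (1 : ℤ) := by
    have := Int.natCast_dvd_natCast.2 hd
    rwa [Nat.cast_sub (Nat.one_le_iff_ne_zero.2 hp), Nat.cast_one] at this
  have pow_dvd := dvd_sub_pow_of_dvd_sub base_dvd (r - 1)
  rw [Nat.sub_add_cancel (Nat.one_le_iff_ne_zero.2 hr), one_pow] at pow_dvd
  have pow_eq : (p : ZMod (l ^ r)) ^ l ^ (r - 1) = 1 := by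
    have cast_eq := (ZMod.intCast_zmod_eq_zero_iff_dvd _ (l ^ r)).2 (by exact_mod_cast pow_dvd)
    push_cast at cast_eq
    exact sub_eq_zero.1 cast_eq
  exact h.not_ge (orderOf_le_of_pow_eq_one (pow_pos (NeZero.pos l) _) pow_eq)

lemma natCast_pow_half_eq_one (hr : r ≠ 0) (hf : orderOf (p : ZMod (l ^ r)) = f) (hodd : Odd f) :
    (p : ZMod l) ^ (l / 2) = 1 := by
  have euler := legendreSym.eq_pow l p
  rw [legendreSym_eq_one_of_odd_orderOf hr hf hodd] at euler
  exact_mod_cast euler.symm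

omit [Fact l.Prime] in
lemma pow_pow_ne_one_of_orderOf_eq {G : Type*} [Monoid G] {x : G} (hl : 1 < l)
    (hx : orderOf x = l ^ r) {t : ℕ} (ht : t < r) : x ^ l ^ t ≠ 1 :=
  pow_ne_one_of_lt_orderOf (pow_pos (zero_lt_one.trans hl) t).ne'
    (hx ▸ Nat.pow_lt_pow_right hl ht)

omit [Fact l.Prime] in
lemma exists_eq_two_mul_add_of_two_mul_eq {N g S c d : ℕ} (hN : Odd N) (hS : S ≤ f * N)
    (hcd : c + d = 1) (h : 2 * (S : ℤ) = N * (f + (c - d) * g)) :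
    ∃ e, f = 2 * e + g ∧ S = N * (e + c * g) := by
  have N_pos : (0 : ℤ) < N := by exact_mod_cast hN.pos
  zify at hS hcd
  have difference_eq : (N : ℤ) * (f - g) = 2 * (S - c * (N * g)) := by
    linear_combination -h + N * g * hcd
  have g_le : (0 : ℤ) ≤ f - g := by
    refine (mul_nonneg_iff_of_pos_left N_pos).1 ?_
    rcases Nat.le_one_iff_eq_zero_or_eq_one.1 (show c ≤ 1 by omega) with rfl | rfl <;>
      push_cast at * <;> nlinarith
  have two_dvd : (2 : ℤ) ∣ f - g :=
    (Nat.isCoprime_iff_coprime.2 (Nat.coprime_two_left.2 hN)).dvd_of_dvd_mul_left ⟨_, difference_eq⟩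
  obtain ⟨e, he⟩ := two_dvd
  lift e to ℕ using by omega
  refine ⟨e, by omega, ?_⟩
  zify
  refine mul_left_cancel₀ (two_ne_zero (α := ℤ)) ?_
  linear_combination -difference_eq + (N : ℤ) * he

lemma exists_legendreSym_mul_legendreMoment_eq (hl4 : l % 4 = 3) (hl3 : 3 < l) {k : ℕ}
    (hk : ¬l ∣ k) : ∃ c d : ℕ, c + d = 1 ∧
      legendreSym l k * legendreMoment l = (c - d) * (classNumSqrtNeg l * l) := by
  have class_number := classNumSqrtNeg_mul_eq_abs_legendreMoment (l := l) (c := (l + 1) / 4)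
    (by omega) (by omega)
  have abs_eq : |legendreSym l k * legendreMoment l| = classNumSqrtNeg l * l := by
    rw [abs_mul, class_number]
    rcases legendreSym_natCast_eq_one_or_neg_one hk with h | h <;> simp [h]
  rcases eq_or_eq_neg_of_abs_eq abs_eq with h | h
  · exact ⟨1, 0, rfl, by rw [h]; push_cast; ring⟩
  · exact ⟨0, 1, rfl, by rw [h]; push_cast; ring⟩

end IndexTwo

section GaussSumEvaluation

variable {p l r f : ℕ} [Fact p.Prime] [Fact l.Prime] {F : Type*} [Field F] [Fintype F]
  [Algebra (ZMod p) F] {χ : MulChar F ℂ} {V : ValuationSubring ℂ}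

lemma gaussSum_mul_conj (hcard : Fintype.card F = p ^ f) (hχ : χ ≠ 1) :
    gaussSum χ (traceChar F p) * starRingEnd ℂ (gaussSum χ (traceChar F p)) = p ^ f := by
  rw [starRingEnd_apply, star_gaussSum_eq,
    gaussSum_mul_gaussSum_eq_card hχ (traceChar_isPrimitive p), hcard, Nat.cast_pow]

lemma exists_valuation_gaussSum_eq (hV : V.valuation (p : ℂ) < 1) (hl4 : l % 4 = 3) (hl3 : 3 < l)
    (hr : r ≠ 0) (hcard : Fintype.card F = p ^ f) (hf : orderOf (p : ZMod (l ^ r)) = f)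
    (hφ : Nat.totient (l ^ r) = 2 * f) (hχ : orderOf χ = l ^ r) :
    ∃ c d : ℕ, c + d = 1 ∧ ∀ t < r, ∃ e, f = 2 * e + classNumSqrtNeg l * l ^ t ∧
      V.valuation (gaussSum (χ ^ l ^ t) (traceChar F p)) =
        V.valuation (p : ℂ) ^ (e + c * (classNumSqrtNeg l * l ^ t)) := by
  have hodd := odd_of_totient_eq hl4 hr hφ
  have l_odd : Odd l := Nat.odd_iff.2 (by omega)
  have prime_l : l.Prime := Fact.out
  obtain ⟨k, k_coprime, stickelberger⟩ := exists_coprime_valuation_gaussSum_pow hV hcard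
    (by simpa using pow_pow_ne_one_of_orderOf_eq prime_l.one_lt hχ (Nat.pos_of_ne_zero hr))
  rw [hχ] at k_coprime stickelberger
  have hk : ¬l ∣ k := (prime_l.coprime_iff_not_dvd).1
    (Nat.Coprime.coprime_dvd_right (dvd_pow_self l hr) k_coprime).symm
  obtain ⟨c, d, hcd, moment_eq⟩ := exists_legendreSym_mul_legendreMoment_eq hl4 hl3 hk
  refine ⟨c, d, hcd, fun t ht => ?_⟩
  have residueSum_eq := two_mul_frobeniusResidueSum hl4 hf hφ hodd hk ht
  obtain ⟨e, f_eq, S_eq⟩ := exists_eq_two_mul_add_of_two_mul_eq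
    (g := classNumSqrtNeg l * l ^ t) (l_odd.pow (n := r))
    (frobeniusResidueSum_le p f (l ^ t * k) (pow_pos prime_l.pos r)) hcd (by
      have pow_eq : (l : ℤ) ^ r = l ^ (r - 1) * l := (pow_sub_one_mul hr _).symm
      rw [residueSum_eq, Nat.cast_pow, Nat.cast_mul, Nat.cast_pow, pow_eq]
      linear_combination (l : ℤ) ^ t * l ^ (r - 1) * moment_eq)
  refine ⟨e, f_eq, (pow_left_inj₀ zero_le zero_le (pow_pos prime_l.pos r).ne').1 ?_⟩
  rw [stickelberger, mul_comm k, S_eq, mul_comm, pow_mul]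

lemma not_dvd_sub_one_of_totient_eq (hl4 : l % 4 = 3) (hl3 : 3 < l) (hr : r ≠ 0)
    (hf : orderOf (p : ZMod (l ^ r)) = f) (hφ : Nat.totient (l ^ r) = 2 * f) : ¬l ∣ p - 1 := by
  refine not_dvd_sub_one_of_pow_lt_orderOf (Fact.out : p.Prime).ne_zero hr ?_
  rw [hf, eq_pow_mul_half_of_totient_eq (by omega) hr hφ]
  exact lt_mul_of_one_lt_right (pow_pos (NeZero.pos l) _) (by omega)

lemma gaussSum_pow_mem_adjoin_sqrtNeg (hl4 : l % 4 = 3) (hl3 : 3 < l) (hr : r ≠ 0)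
    (hf : orderOf (p : ZMod (l ^ r)) = f) (hφ : Nat.totient (l ^ r) = 2 * f)
    (hχ : orderOf χ = l ^ r) (n : ℕ) :
    gaussSum (χ ^ n) (traceChar F p) ∈ ℚ⟮sqrtNeg l⟯ :=
  gaussSum_mem_adjoin_sqrtNeg p hl4 hr (not_dvd_sub_one_of_totient_eq hl4 hl3 hr hf hφ) hf hφ
    (odd_of_totient_eq hl4 hr hφ) (by rw [pow_right_comm, ← hχ, pow_orderOf_eq_one, one_pow])

omit [Fact p.Prime] [Fact l.Prime] in
lemma add_mul_half_eq_mul {L g e e' c : ℕ} (hL : Odd L) (hf : f = 2 * e + g)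
    (hf' : f = 2 * e' + g * L) : e' + c * (g * L) + f * (L / 2) = (e + c * g) * L := by
  obtain ⟨s, rfl⟩ := hL
  have e_eq : e = e' + g * s := by linarith
  rw [show (2 * s + 1) / 2 = s by omega, hf, e_eq]
  ring

lemma gaussSum_mul_prime_pow_eq_or_eq_neg (hl4 : l % 4 = 3) (hl3 : 3 < l) (hr : r ≠ 0)
    (hcard : Fintype.card F = p ^ f) (hf : orderOf (p : ZMod (l ^ r)) = f)
    (hφ : Nat.totient (l ^ r) = 2 * f) (hχ : orderOf χ = l ^ r) {t : ℕ} (ht : t < r) :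
    gaussSum (χ ^ l ^ t) (traceChar F p) * p ^ (f * (l ^ t / 2)) =
        gaussSum χ (traceChar F p) ^ l ^ t ∨
      gaussSum (χ ^ l ^ t) (traceChar F p) * p ^ (f * (l ^ t / 2)) =
        -gaussSum χ (traceChar F p) ^ l ^ t := by
  have prime_p : p.Prime := Fact.out
  have prime_l : l.Prime := Fact.out
  obtain ⟨V, hV⟩ := exists_valuationSubring_natCast_lt_one (K := ℂ) prime_p
  obtain ⟨c, -, -, valuation_eq⟩ := exists_valuation_gaussSum_eq hV hl4 hl3 hr hcard hf hφ hχ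
  obtain ⟨e, f_eq, val_gaussSum⟩ := valuation_eq 0 (Nat.pos_of_ne_zero hr)
  obtain ⟨e', f_eq', val_gaussSum'⟩ := valuation_eq t ht
  rw [pow_zero, mul_one] at f_eq val_gaussSum
  rw [pow_one] at val_gaussSum
  have odd_pow : Odd (l ^ t) := (Nat.odd_iff.2 (by omega)).pow
  have ne_one (i : ℕ) (hi : i < r) : χ ^ l ^ i ≠ 1 :=
    pow_pow_ne_one_of_orderOf_eq prime_l.one_lt hχ hi
  have mem := gaussSum_pow_mem_adjoin_sqrtNeg (F := F) hl4 hl3 hr hf hφ hχ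
  refine eq_or_eq_neg_of_valuation_eq (m := f * l ^ t) prime_p hV prime_l (by omega)
    (mul_mem (mem _) (pow_mem (_root_.natCast_mem _ p) _)) (pow_mem (by simpa using mem 1) _)
    ((isIntegral_gaussSum p _).mul (.pow (isIntegral_natCast _) _))
    ((isIntegral_gaussSum p _).pow _) ?_ ?_ ?_
  · rw [map_mul, map_pow, map_natCast, mul_mul_mul_comm, gaussSum_mul_conj hcard (ne_one t ht),
      ← mul_pow]
    conv_rhs => rw [← Nat.two_mul_div_two_add_one_of_odd odd_pow]
    ring
  · rw [map_pow, ← mul_pow, gaussSum_mul_conj hcard (by simpa using ne_one 0 (by omega)), pow_mul]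
  · rw [map_mul, map_pow, map_pow, val_gaussSum, val_gaussSum', ← pow_add, ← pow_mul,
      add_mul_half_eq_mul odd_pow f_eq f_eq']

lemma gaussSum_mul_prime_pow_eq_pow (hl4 : l % 4 = 3) (hl3 : 3 < l) (hr : r ≠ 0)
    (hcard : Fintype.card F = p ^ f) (hf : orderOf (p : ZMod (l ^ r)) = f)
    (hφ : Nat.totient (l ^ r) = 2 * f) (hχ : orderOf χ = l ^ r) {t : ℕ} (ht : t < r) :
    gaussSum (χ ^ l ^ t) (traceChar F p) * p ^ (f * (l ^ t / 2)) =
      gaussSum χ (traceChar F p) ^ l ^ t := by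
  have prime_l : l.Prime := Fact.out
  obtain ⟨W, hW⟩ := exists_valuationSubring_natCast_lt_one (K := ℂ) prime_l
  have χ_pow : χ ^ l ^ r = 1 := hχ ▸ pow_orderOf_eq_one χ
  have p_pow_f : (p : ZMod l) ^ (f * (l ^ t / 2)) = 1 := by
    rw [eq_pow_mul_half_of_totient_eq (by omega) hr hφ, mul_comm (l ^ (r - 1)), mul_assoc, pow_mul,
      natCast_pow_half_eq_one hr hf (odd_of_totient_eq hl4 hr hφ), one_pow]
  have left_congr := valuation_mul_sub_one_lt_one
    (valuation_neg_gaussSum_sub_one_lt_one prime_l hW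
      (by rw [pow_right_comm, χ_pow, one_pow] : (χ ^ l ^ t) ^ l ^ r = 1) (traceChar_ne_one p))
    (valuation_natCast_pow_sub_one_lt_one prime_l hW p_pow_f)
  have right_congr := valuation_pow_sub_one_lt_one
    (valuation_neg_gaussSum_sub_one_lt_one prime_l hW χ_pow (traceChar_ne_one p)) (l ^ t)
  have odd_pow : Odd (l ^ t) := (Nat.odd_iff.2 (by omega)).pow
  rw [odd_pow.neg_pow] at right_congr
  rw [neg_mul] at left_congr
  refine neg_injective (eq_of_valuation_sub_one_lt_one prime_l (by omega) hW left_congr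
    right_congr ?_)
  rw [neg_inj, neg_neg, neg_eq_iff_eq_neg]
  exact gaussSum_mul_prime_pow_eq_or_eq_neg hl4 hl3 hr hcard hf hφ hχ ht

lemma valuation_conj_gaussSum_eq {V : ValuationSubring ℂ} (hcard : Fintype.card F = p ^ f)
    (hχ : χ ≠ 1) {m n : ℕ} (hf : f = m + n)
    (hm : V.valuation (gaussSum χ (traceChar F p)) = V.valuation (p : ℂ) ^ m) :
    V.valuation (starRingEnd ℂ (gaussSum χ (traceChar F p))) = V.valuation (p : ℂ) ^ n := by
  have val_p_ne : V.valuation (p : ℂ) ≠ 0 :=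
    (Valuation.ne_zero_iff _).2 (Nat.cast_ne_zero.2 (Fact.out : p.Prime).ne_zero)
  refine mul_left_cancel₀ (pow_ne_zero m val_p_ne) ?_
  rw [← pow_add, ← hm, ← map_mul, gaussSum_mul_conj hcard hχ, map_pow, hf]

lemma exists_isIntegral_gaussSum_div (hl4 : l % 4 = 3) (hl3 : 3 < l) (hr : r ≠ 0)
    (hcard : Fintype.card F = p ^ f) (hf : orderOf (p : ZMod (l ^ r)) = f)
    (hφ : Nat.totient (l ^ r) = 2 * f) (hχ : orderOf χ = l ^ r) :
    ∃ e : ℕ, f = 2 * e + classNumSqrtNeg l ∧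
      IsIntegral ℤ (gaussSum χ (traceChar F p) / p ^ e) := by
  have prime_p : p.Prime := Fact.out
  obtain ⟨V, hV⟩ := exists_valuationSubring_natCast_lt_one (K := ℂ) prime_p
  obtain ⟨c, d, hcd, valuation_eq⟩ := exists_valuation_gaussSum_eq hV hl4 hl3 hr hcard hf hφ hχ
  obtain ⟨e, f_eq, val_gaussSum⟩ := valuation_eq 0 (Nat.pos_of_ne_zero hr)
  simp only [pow_zero, mul_one, pow_one] at f_eq val_gaussSum
  have χ_ne_one : χ ≠ 1 := by
    simpa using pow_pow_ne_one_of_orderOf_eq (by omega) hχ (Nat.pos_of_ne_zero hr)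
  have val_conj := valuation_conj_gaussSum_eq hcard χ_ne_one
    (n := e + d * classNumSqrtNeg l) (by linear_combination f_eq - classNumSqrtNeg l * hcd)
    val_gaussSum
  have G_mem : gaussSum χ (traceChar F p) ∈ ℚ⟮sqrtNeg l⟯ := by
    simpa using gaussSum_pow_mem_adjoin_sqrtNeg (F := F) hl4 hl3 hr hf hφ hχ 1
  refine ⟨e, f_eq, isIntegral_div_prime_pow prime_p hV G_mem (isIntegral_gaussSum p χ) ?_ ?_⟩
  · rw [val_gaussSum]
    exact pow_le_pow_right_of_le_one' hV.le (Nat.le_add_right _ _)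
  · rw [val_conj]
    exact pow_le_pow_right_of_le_one' hV.le (Nat.le_add_right _ _)

lemma exists_gaussSum_eq_prime_pow_mul (hl4 : l % 4 = 3) (hl3 : 3 < l) (hr : r ≠ 0)
    (hcard : Fintype.card F = p ^ f) (hf : orderOf (p : ZMod (l ^ r)) = f)
    (hφ : Nat.totient (l ^ r) = 2 * f) (hχ : orderOf χ = l ^ r) :
    ∃ (e : ℕ) (a b : ℤ), f = 2 * e + classNumSqrtNeg l ∧
      4 * (p : ℤ) ^ classNumSqrtNeg l = a ^ 2 + l * b ^ 2 ∧
      gaussSum χ (traceChar F p) = p ^ e * ((a + b * sqrtNeg l) / 2) := by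
  obtain ⟨e, f_eq, integral⟩ := exists_isIntegral_gaussSum_div hl4 hl3 hr hcard hf hφ hχ
  have p_pow_ne (n : ℕ) : (p : ℂ) ^ n ≠ 0 :=
    pow_ne_zero n (Nat.cast_ne_zero.2 (Fact.out : p.Prime).ne_zero)
  have G_mem : gaussSum χ (traceChar F p) ∈ ℚ⟮sqrtNeg l⟯ := by
    simpa using gaussSum_pow_mem_adjoin_sqrtNeg (F := F) hl4 hl3 hr hf hφ hχ 1
  obtain ⟨a, b, quotient_eq⟩ := exists_eq_half_add_mul_sqrtNeg Fact.out
    (div_mem G_mem (pow_mem (_root_.natCast_mem _ p) e)) integral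
  rw [div_eq_iff (p_pow_ne e), mul_comm] at quotient_eq
  refine ⟨e, a, b, f_eq, ?_, quotient_eq⟩
  have χ_ne_one : χ ≠ 1 := by
    simpa using pow_pow_ne_one_of_orderOf_eq (by omega) hχ (Nat.pos_of_ne_zero hr)
  have norm_eq := gaussSum_mul_conj (p := p) hcard χ_ne_one
  rw [quotient_eq, map_mul, map_pow, map_natCast, mul_mul_mul_comm, half_add_mul_sqrtNeg_mul_conj,
    f_eq, pow_add, ← pow_add, ← two_mul] at norm_eq
  have form_eq := mul_left_cancel₀ (p_pow_ne (2 * e)) norm_eq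
  rw [div_eq_iff (by norm_num)] at form_eq
  exact_mod_cast (mul_comm _ _).trans form_eq.symm

lemma dvd_prime_pow_mul_add_two_of_gaussSum_eq (hχ : χ ^ l ^ r = 1) {e : ℕ} {a b : ℤ}
    (h : gaussSum χ (traceChar F p) = p ^ e * ((a + b * sqrtNeg l) / 2)) :
    (l : ℤ) ∣ p ^ e * a + 2 := by
  have prime_l : l.Prime := Fact.out
  obtain ⟨W, hW⟩ := exists_valuationSubring_natCast_lt_one (K := ℂ) prime_l
  have gaussSum_congr := valuation_neg_gaussSum_sub_one_lt_one prime_l hW hχ (traceChar_ne_one p)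
  have conj_congr := valuation_neg_gaussSum_sub_one_lt_one prime_l hW
    (by rw [inv_pow, hχ, inv_one] : χ⁻¹ ^ l ^ r = 1) (inv_ne_one.2 (traceChar_ne_one (F := F) p))
  rw [← star_gaussSum_eq, ← starRingEnd_apply] at conj_congr
  rw [← valuation_intCast_lt_one_iff prime_l hW, ← Valuation.map_neg]
  convert W.valuation.map_add_lt gaussSum_congr conj_congr using 2
  rw [h]
  simp only [map_add, map_mul, map_div₀, map_pow, map_natCast, map_intCast, map_ofNat,
    conj_sqrtNeg]
  push_cast
  ring

omit [Fact p.Prime] in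
lemma add_quarter_eq_half_mul (hl4 : l % 4 = 3) (hr : r ≠ 0)
    (hφ : Nat.totient (l ^ r) = 2 * f) {e h : ℕ} (hfe : f = 2 * e + h) :
    e + (l - 1 + 2 * h) / 4 = l / 2 * ((l ^ (r - 1) + 1) / 2) := by
  have f_odd := odd_of_totient_eq hl4 hr hφ
  have f_eq := eq_pow_mul_half_of_totient_eq (by omega) hr hφ
  obtain ⟨j, rfl⟩ : Odd h := by grind
  obtain ⟨k, rfl⟩ : ∃ k, l = 4 * k + 3 := ⟨l / 4, by omega⟩
  obtain ⟨s, hs⟩ : Odd ((4 * k + 3) ^ (r - 1)) := (Nat.odd_iff.2 (by omega)).pow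
  rw [hs, show (4 * k + 3) / 2 = 2 * k + 1 by omega] at f_eq ⊢
  rw [show (2 * s + 1 + 1) / 2 = s + 1 by omega,
    show (4 * k + 3 - 1 + 2 * (2 * j + 1)) / 4 = k + j + 1 by omega]
  linarith

omit [Fact p.Prime] in
lemma modEq_neg_two_mul_prime_pow (hl4 : l % 4 = 3) (hr : r ≠ 0)
    (hf : orderOf (p : ZMod (l ^ r)) = f) (hφ : Nat.totient (l ^ r) = 2 * f) {e h : ℕ}
    (hfe : f = 2 * e + h) {a : ℤ} (ha : (l : ℤ) ∣ p ^ e * a + 2) :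
    a ≡ -2 * p ^ ((l - 1 + 2 * h) / 4) [ZMOD l] := by
  have pow_eq : (p : ZMod l) ^ e * p ^ ((l - 1 + 2 * h) / 4) = 1 := by
    rw [← pow_add, add_quarter_eq_half_mul hl4 hr hφ hfe, pow_mul,
      natCast_pow_half_eq_one hr hf (odd_of_totient_eq hl4 hr hφ), one_pow]
  have zero_eq := (ZMod.intCast_zmod_eq_zero_iff_dvd _ l).2 ha
  rw [← ZMod.intCast_eq_intCast_iff]
  push_cast at zero_eq ⊢
  linear_combination (p : ZMod l) ^ ((l - 1 + 2 * h) / 4) * zero_eq - (a : ZMod l) * pow_eq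

lemma gaussSum_pow_eq_zpow_mul_pow (hl4 : l % 4 = 3) (hl3 : 3 < l) (hr : r ≠ 0)
    (hcard : Fintype.card F = p ^ f) (hf : orderOf (p : ZMod (l ^ r)) = f)
    (hφ : Nat.totient (l ^ r) = 2 * f) (hχ : orderOf χ = l ^ r) {e h : ℕ} (hfe : f = 2 * e + h)
    {α : ℂ} (hα : gaussSum χ (traceChar F p) = p ^ e * α) {t : ℕ} (ht : t < r) :
    gaussSum (χ ^ l ^ t) (traceChar F p) =
      (p : ℂ) ^ (((f : ℤ) - h * (l : ℤ) ^ t) / 2) * α ^ l ^ t := by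
  have p_ne : (p : ℂ) ≠ 0 := Nat.cast_ne_zero.2 (Fact.out : p.Prime).ne_zero
  have power_eq := gaussSum_mul_prime_pow_eq_pow hl4 hl3 hr hcard hf hφ hχ ht
  obtain ⟨s, hs⟩ : Odd (l ^ t) := (Nat.odd_iff.2 (by omega)).pow
  rw [hα, mul_pow, ← pow_mul, show l ^ t / 2 = s by omega] at power_eq
  have exponent_eq : ((f : ℤ) - h * (l : ℤ) ^ t) / 2 = (e * l ^ t : ℕ) - (f * s : ℕ) := by
    have hs' : (l : ℤ) ^ t = 2 * s + 1 := by exact_mod_cast hs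
    push_cast
    rw [hs', hfe]
    refine Int.ediv_eq_of_eq_mul_left two_ne_zero ?_
    push_cast
    ring
  rw [exponent_eq, zpow_sub₀ p_ne, zpow_natCast, zpow_natCast, div_mul_eq_mul_div, ← power_eq,
    mul_div_cancel_right₀ _ (pow_ne_zero _ p_ne)]

end GaussSumEvaluation

end IndexTwoGaussSum

theorem statement16 (p l r N f : ℕ) (hp : p.Prime) (hl : l.Prime) (hl4 : l % 4 = 3)
    (hl7 : 7 ≤ l) (hr : 1 ≤ r) (hN : N = l ^ r) (hNp : Nat.gcd N p = 1)
    (hf : orderOf (p : ZMod N) = f) (hind : f = Nat.totient N / 2)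
    (F : Type) [Field F] [Fintype F] [Algebra (ZMod p) F]
    (hcard : Fintype.card F = p ^ f)
    (χ : MulChar F ℂ) (hχord : orderOf χ = N) :
    ∃ a b : ℤ,
      4 * (p : ℤ) ^ classNumSqrtNeg l = a ^ 2 + (l : ℤ) * b ^ 2 ∧
      a ≡ -2 * (p : ℤ) ^ ((l - 1 + 2 * classNumSqrtNeg l) / 4) [ZMOD (l : ℤ)] ∧
      ∀ t : ℕ, t < r →
        gaussSumN p χ (l ^ t) =
          (p : ℂ) ^ (((f : ℤ) - (classNumSqrtNeg l : ℤ) * (l : ℤ) ^ t) / 2) *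
            (((a : ℂ) + (b : ℂ) * sqrtNeg l) / 2) ^ (l ^ t) := by
  have : Fact p.Prime := ⟨hp⟩
  have : Fact l.Prime := ⟨hl⟩
  have hr0 : r ≠ 0 := by omega
  have hl3 : 3 < l := by omega
  subst hN
  have hφ : Nat.totient (l ^ r) = 2 * f := by
    have two_lt : 2 < l ^ r := lt_of_lt_of_le (by omega) (Nat.le_self_pow hr0 l)
    have := (Nat.totient_even two_lt).two_dvd
    omega
  obtain ⟨e, a, b, f_eq, norm_eq, gaussSum_eq⟩ :=
    IndexTwoGaussSum.exists_gaussSum_eq_prime_pow_mul hl4 hl3 hr0 hcard hf hφ hχord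
  have dvd := IndexTwoGaussSum.dvd_prime_pow_mul_add_two_of_gaussSum_eq
    (hχord ▸ pow_orderOf_eq_one χ) gaussSum_eq
  refine ⟨a, b, norm_eq,
    IndexTwoGaussSum.modEq_neg_two_mul_prime_pow hl4 hr0 hf hφ f_eq dvd, fun t ht => ?_⟩
  rw [IndexTwoGaussSum.gaussSumN_eq_gaussSum]
  exact IndexTwoGaussSum.gaussSum_pow_eq_zpow_mul_pow hl4 hl3 hr0 hcard hf hφ hχord f_eq
    gaussSum_eq ht
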